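/- Let G be a connected simple graph that contains at least one cycle and is not itself a cycle, such that every edge of G lies on at most one cycle, the maximum degree of G is at most 3, and every vertex of degree 3 lies on a cycle of G (these are exactly the non-cycle members of the family 𝔗*, obtained from a cycle by repeatedly identifying a degree-2 cycle vertex with an endvertex of a path of positive length, or with an endvertex of a path whose other endvertex is identified with a vertex of a new cycle). Let k = |E(G)| - |V(G)| + 1 be the number of cycles of G. Then there exist a matching E_d (a set of pairwise non-adjacent edges) of at most k edges of G, each edge of E_d having both endpoints of degree at least 2 in G, and a 2-edge-coloring c, such that (E_d, c) is a valid doubling-coloring of G. -/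

import Mathlib

open Finset
open scoped Classical

/-- The degree of a vertex (as the number of neighbors). -/
noncomputable def ndeg {V : Type*} (G : SimpleGraph V) (v : V) : ℕ :=
  {w | G.Adj v w}.ncard

/-- The weighted degree of vertex `v` in color `i`: each edge incident to `v` colored `i`
counts 2 if it is doubled (lies in `D`) and 1 otherwise. -/
noncomputable def wdeg {V : Type*} [Fintype V] (G : SimpleGraph V)
    (D : Finset (Sym2 V)) (c : Sym2 V → Fin 2) (i : Fin 2) (v : V) : ℕ :=
  ∑ w ∈ Finset.univ.filter (fun w => G.Adj v w ∧ c s(v, w) = i),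
    (if s(v, w) ∈ D then 2 else 1)

/-- `(D, c)` is a valid doubling-coloring of `G`. -/
def ValidDC {V : Type*} [Fintype V] (G : SimpleGraph V)
    (D : Finset (Sym2 V)) (c : Sym2 V → Fin 2) : Prop :=
  ↑D ⊆ G.edgeSet ∧
    ∀ u v, G.Adj u v →
      wdeg G D c (c s(u, v)) u ≠ wdeg G D c (c s(u, v)) v


/-- Types of cycle vertices. -/
inductive VT | F | O | P | E
deriving DecidableEq

namespace DL

/-- value in incoming colour -/
def lv (din dout : Bool) (t : VT) (m q : Bool) : ℕ :=
  (1 + din.toNat) + (if m then 0 else 1 + dout.toNat) + (if t = VT.F ∨ q = true then 0 else 1)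

/-- value in outgoing colour -/
def rv (din dout : Bool) (t : VT) (m q : Bool) : ℕ :=
  (1 + dout.toNat) + (if m then 0 else 1 + din.toNat) + (if t = VT.F ∨ q ≠ m then 0 else 1)

/-- value in the colour of the bridge -/
def gv (din dout : Bool) (t : VT) (m q : Bool) : ℕ :=
  if q then 1 + (if m then 1 + dout.toNat else 0) else lv din dout t m q

/-- permitted bridge values -/
def okg (t : VT) (x : ℕ) : Prop :=
  (t = VT.O → x = 1 ∨ x = 3) ∧ (t = VT.P → x = 1 ∨ x = 3 ∨ x = 4) ∧ (t = VT.E → x = 2 ∨ x = 4)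

instance (t : VT) (x : ℕ) : Decidable (okg t x) := by unfold okg; infer_instance

/-- parity of the initial segment -/
def par (m : ℕ → Bool) : ℕ → Bool
  | 0 => false
  | k + 1 => xor (par m k) (m k)

theorem par_congr (m m' : ℕ → Bool) (k : ℕ) (h : ∀ i < k, m i = m' i) : par m k = par m' k := by
  induction k with
  | zero => rfl
  | succ k ih => simp only [par]; rw [ih (fun i hi => h i (by omega)), h k (by omega)]

/-- Partial solutions along the first `j+1` vertices. -/
def Reach (τ : ℕ → VT) (d m0 q0 : Bool) (j r : ℕ) (p : Bool) : Prop :=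
  ∃ m q : ℕ → Bool, m 0 = m0 ∧ q 0 = q0 ∧
    (∀ i ≤ j, okg (τ i) (gv (d && decide (i = 0)) false (τ i) (m i) (q i))) ∧
    (∀ i < j, rv (d && decide (i = 0)) false (τ i) (m i) (q i) ≠
      lv false false (τ (i + 1)) (m (i + 1)) (q (i + 1))) ∧
    rv (d && decide (j = 0)) false (τ j) (m j) (q j) = r ∧ par m (j + 1) = p

theorem Reach.start (τ : ℕ → VT) (d m0 q0 : Bool) (h : okg (τ 0) (gv d false (τ 0) m0 q0)) :
    Reach τ d m0 q0 0 (rv d false (τ 0) m0 q0) m0 := by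
  refine ⟨fun _ => m0, fun _ => q0, rfl, rfl, ?_, ?_, ?_, ?_⟩
  · intro i hi
    obtain rfl : i = 0 := by omega
    simpa using h
  · intro i hi; omega
  · simp
  · simp [par]

theorem Reach.step {τ : ℕ → VT} {d m0 q0 : Bool} {j r : ℕ} {p : Bool}
    (h : Reach τ d m0 q0 j r p) (m q : Bool)
    (hg : okg (τ (j + 1)) (gv false false (τ (j + 1)) m q))
    (hl : r ≠ lv false false (τ (j + 1)) m q) :
    Reach τ d m0 q0 (j + 1) (rv false false (τ (j + 1)) m q) (xor p m) := by
  obtain ⟨M, Q, h0, h1, h2, h3, h4, h5⟩ := h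
  refine ⟨fun i => if i = j + 1 then m else M i, fun i => if i = j + 1 then q else Q i,
    by simpa using h0, by simpa using h1, ?_, ?_, ?_, ?_⟩
  · intro i hi
    by_cases hij : i = j + 1
    · subst hij; simpa using hg
    · simpa [hij] using h2 i (by omega)
  · intro i hi
    by_cases hij : i = j
    · subst hij; simpa [h4] using hl
    · have a1 : i ≠ j + 1 := by omega
      have := h3 i (by omega)
      simpa [hij, a1] using this
  · simp
  · rw [par, ← h5]
    simp only [if_true]
    congr 1
    apply par_congr
    intro i hi
    have : i ≠ j + 1 := by omega
    simp [this]

/-- weighted value at a cycle vertex -/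
def W {n : ℕ} (τ : ZMod n → VT) (e d g : ZMod n → Bool) (i : ZMod n) (b : Bool) : ℕ :=
  (if e (i - 1) = b then 1 + (d (i - 1)).toNat else 0) + (if e i = b then 1 + (d i).toNat else 0) +
    (if τ i ≠ VT.F ∧ g i = b then 1 else 0)

/-- Solvability of a cycle. -/
def Sol {n : ℕ} (τ : ZMod n → VT) : Prop :=
  ∃ e d g : ZMod n → Bool, (∀ i j, d i = true → d j = true → i = j) ∧
    ∀ i, okg (τ i) (W τ e d g i (g i)) ∧ W τ e d g i (e i) ≠ W τ e d g (i + 1) (e i)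

theorem Sol.rot {n : ℕ} (τ : ZMod n → VT) (a : ZMod n) (h : Sol (fun i => τ (i + a))) : Sol τ := by
  obtain ⟨e, d, g, h1, h2⟩ := h
  refine ⟨fun i => e (i - a), fun i => d (i - a), fun i => g (i - a), ?_, ?_⟩
  · intro i j hi hj
    have := h1 _ _ hi hj
    exact sub_left_injective this
  · intro i
    have := h2 (i - a)
    have e1 : i - 1 - a = i - a - 1 := by ring
    have e2 : i + 1 - a = i - a + 1 := by ring
    have e3 : i - a + a = i := by ring
    have e4 : i - a + 1 + a = i + 1 := by ring
    have e5 : i + 1 - 1 - a = i - a + 1 - 1 := by ring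
    simp only [W, e1, e2, e3, e4, e5] at this ⊢
    exact this

theorem close {N : ℕ} (τ : ZMod (N + 3) → VT) {d m0 q0 : Bool} {r : ℕ} {p : Bool}
    (h : Reach (fun i => τ (i : ZMod (N+3))) d m0 q0 (N + 1) r p) (m q : Bool)
    (hg : okg (τ (-1)) (gv false d (τ (-1)) m q))
    (hl : r ≠ lv false d (τ (-1)) m q)
    (hr : rv false d (τ (-1)) m q ≠ lv d false (τ 0) m0 q0)
    (hp : xor p m = false) : Sol τ := by
  obtain ⟨M0, Q0, h0, h1, h2, h3, h4, h5⟩ := h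
  have hneg : ((N + 2 : ℕ) : ZMod (N+3)) = -1 := by
    have : ((N + 3 : ℕ) : ZMod (N+3)) = 0 := ZMod.natCast_self _
    push_cast at this ⊢
    linear_combination this
  obtain ⟨M, hM⟩ : ∃ M : ℕ → Bool, M = fun i => if i = N + 2 then m else M0 i := ⟨_, rfl⟩
  obtain ⟨Q, hQ⟩ : ∃ Q : ℕ → Bool, Q = fun i => if i = N + 2 then q else Q0 i := ⟨_, rfl⟩
  have parEnd : par M (N + 3) = false := by
    rw [par, ← hp, ← h5]
    congr 1
    · apply par_congr
      intro i hi
      have : i ≠ N + 2 := by omega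
      simp [hM, this]
    · simp [hM]
  have hMl : M (N + 2) = m := by simp [hM]
  have hQl : Q (N + 2) = q := by simp [hQ]
  have hM' : ∀ i, i ≤ N + 1 → M i = M0 i := by
    intro i hi
    have : i ≠ N + 2 := by omega
    simp [hM, this]
  have hQ' : ∀ i, i ≤ N + 1 → Q i = Q0 i := by
    intro i hi
    have : i ≠ N + 2 := by omega
    simp [hQ, this]
  -- linear statement
  have A : ∀ i ≤ N + 2, okg (τ i) (gv (d && decide (i = 0)) (d && decide (i = N + 2)) (τ i) (M i) (Q i)) := by
    intro i hi
    by_cases hij : i = N + 2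
    · subst hij; rw [hMl, hQl, hneg]; simpa using hg
    · rw [hM' i (by omega), hQ' i (by omega)]; simpa [hij] using h2 i (by omega)
  have Bq : ∀ i < N + 2, rv (d && decide (i = 0)) (d && decide (i = N + 2)) (τ i) (M i) (Q i) ≠
      lv (d && decide (i + 1 = 0)) (d && decide (i + 1 = N + 2)) (τ ((i + 1 : ℕ) : ZMod (N+3))) (M (i + 1)) (Q (i + 1)) := by
    intro i hi
    by_cases hij : i = N + 1
    · subst hij; rw [hMl, hQl, hM' _ le_rfl, hQ' _ le_rfl, hneg]
      have h6 : rv false false (τ ((N + 1 : ℕ) : ZMod (N+3))) (M0 (N + 1)) (Q0 (N + 1)) = r := by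
        simpa using h4
      have a1 : ¬ (N + 1 = N + 2) := by omega
      have a2 : ¬ (N + 1 = 0) := by omega
      have a3 : ¬ (N + 1 + 1 = 0) := by omega
      simp only [a1, a2, a3, decide_false, decide_true, Bool.and_false, Bool.and_true, h6]
      exact hl
    · rw [hM' i (by omega), hQ' i (by omega), hM' (i+1) (by omega), hQ' (i+1) (by omega)]
      have a1 : i ≠ N + 2 := by omega
      simpa [hij, a1] using h3 i (by omega)
  have hm00 : M 0 = m0 := by rw [hM' 0 (by omega), h0]
  have hq00 : Q 0 = q0 := by rw [hQ' 0 (by omega), h1]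
  have Cq : rv false d (τ ((N + 2 : ℕ) : ZMod (N+3))) (M (N + 2)) (Q (N + 2)) ≠ lv d false (τ 0) (M 0) (Q 0) := by
    rw [hMl, hQl, hm00, hq00, hneg]; exact hr
  let e : ZMod (N+3) → Bool := fun i => par M (i.val + 1)
  let dd : ZMod (N+3) → Bool := fun i => d && decide (i.val = N + 2)
  let g : ZMod (N+3) → Bool := fun i => xor (Q i.val) (par M i.val)
  have vlt : ∀ i : ZMod (N+3), i.val < N + 3 := fun i => ZMod.val_lt i
  have vsub : ∀ i : ZMod (N+3), (i.val ≠ 0 → (i - 1).val = i.val - 1) ∧ (i.val = 0 → (i-1).val = N + 2) := by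
    intro i
    constructor
    · intro hi
      have : i - 1 = ((i.val - 1 : ℕ) : ZMod (N+3)) := by
        rw [Nat.cast_sub (by omega)]; simp
      rw [this, ZMod.val_natCast_of_lt]
      have := vlt i; omega
    · intro hi
      have : i = 0 := (ZMod.val_eq_zero i).1 hi
      rw [this, zero_sub, ← hneg, ZMod.val_natCast_of_lt (by omega)]
  have e1 : ∀ i : ZMod (N+3), e (i - 1) = par M i.val := by
    intro i
    by_cases hi : i.val = 0
    · simp only [e]; rw [(vsub i).2 hi, hi, parEnd]; rfl
    · simp only [e]; rw [(vsub i).1 hi]; congr 1; omega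
  have d1 : ∀ i : ZMod (N+3), dd (i - 1) = (d && decide (i.val = 0)) := by
    intro i
    have := vlt i
    by_cases hi : i.val = 0
    · simp only [dd]; rw [(vsub i).2 hi, hi]; simp
    · simp only [dd]; rw [(vsub i).1 hi]
      have : i.val - 1 ≠ N + 2 := by omega
      simp [this, hi]
  have Wl : ∀ i : ZMod (N+3), W τ e dd g i (e (i - 1)) =
      lv (d && decide (i.val = 0)) (d && decide (i.val = N + 2)) (τ i) (M i.val) (Q i.val) := by
    intro i
    simp only [W, e1, d1]
    simp only [e, dd, g, lv, par]
    rcases Bool.eq_false_or_eq_true (M i.val) with hm | hm <;>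
    rcases Bool.eq_false_or_eq_true (Q i.val) with hq | hq <;>
    rcases Bool.eq_false_or_eq_true (par M i.val) with hpp | hpp <;> simp [hm, hq, hpp]
  have Wr : ∀ i : ZMod (N+3), W τ e dd g i (e i) =
      rv (d && decide (i.val = 0)) (d && decide (i.val = N + 2)) (τ i) (M i.val) (Q i.val) := by
    intro i
    simp only [W, e1, d1]
    simp only [e, dd, g, rv, par]
    rcases Bool.eq_false_or_eq_true (M i.val) with hm | hm <;>
    rcases Bool.eq_false_or_eq_true (Q i.val) with hq | hq <;>
    rcases Bool.eq_false_or_eq_true (par M i.val) with hpp | hpp <;> simp [hm, hq, hpp] <;> ring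
  have Wg : ∀ i : ZMod (N+3), τ i ≠ VT.F → W τ e dd g i (g i) =
      gv (d && decide (i.val = 0)) (d && decide (i.val = N + 2)) (τ i) (M i.val) (Q i.val) := by
    intro i hi
    simp only [W, e1, d1]
    simp only [e, dd, g, gv, lv, par]
    rcases Bool.eq_false_or_eq_true (M i.val) with hm | hm <;>
    rcases Bool.eq_false_or_eq_true (Q i.val) with hq | hq <;>
    rcases Bool.eq_false_or_eq_true (par M i.val) with hpp | hpp <;> simp [hm, hq, hpp, hi] <;> ring
  refine ⟨e, dd, g, ?_, ?_⟩
  · intro i j hi hj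
    simp only [dd, Bool.and_eq_true, decide_eq_true_eq] at hi hj
    exact ZMod.val_injective _ (hi.2.trans hj.2.symm)
  · intro i
    have cast : ((i.val : ℕ) : ZMod (N+3)) = i := by simp
    constructor
    · by_cases hi : τ i = VT.F
      · simp [okg, hi]
      · rw [Wg i hi]
        have := A i.val (by have := vlt i; omega)
        rwa [cast] at this
    · rw [Wr]
      have := Wl (i + 1)
      rw [add_sub_cancel_right] at this
      rw [this]
      by_cases hi : i.val = N + 2
      · have i0 : i + 1 = 0 := by rw [← cast, hi, hneg]; ring
        rw [hi, i0, ZMod.val_zero]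
        rw [← hi, cast, hi] at Cq
        simpa using Cq
      · have hh : (i + 1).val = i.val + 1 := by
          have := (vsub (i+1)).1
          have h2 := (vsub (i+1)).2
          rw [add_sub_cancel_right] at this h2
          by_cases h3 : (i+1).val = 0
          · exact absurd (h2 h3) hi
          · have := this h3; omega
        have := Bq i.val (by have := vlt i; omega)
        rw [hh]
        rw [Nat.cast_add, Nat.cast_one, cast] at this
        exact this

/-- cyclic discrete intermediate value -/
theorem exists_switch {N : ℕ} (Q : ZMod (N + 3) → Prop) (h1 : ∃ i, Q i) (h2 : ∃ i, ¬ Q i) :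
    ∃ i, Q i ∧ ¬ Q (i + 1) := by
  by_contra hcon
  push Not at hcon
  obtain ⟨a, ha⟩ := h1
  obtain ⟨b, hb⟩ := h2
  have : ∀ k : ℕ, Q (a + k) := by
    intro k
    induction k with
    | zero => simpa using ha
    | succ k ih => have := hcon _ ih; push_cast; rwa [← add_assoc]
  apply hb
  have := this (b - a).val
  simpa using this

section
variable {τ : ℕ → VT} {d m0 q0 : Bool} {j r : ℕ} {p : Bool}

theorem Reach.cast' {r' : ℕ} {p' : Bool} (h : Reach τ d m0 q0 j r p) (hr : r = r') (hp : p = p') :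
    Reach τ d m0 q0 j r' p' := by subst hr; subst hp; exact h

theorem stepE1 (h : Reach τ d m0 q0 j r p) (ht : τ (j + 1) = VT.E) (hr : r ≠ 2) :
    Reach τ d m0 q0 (j + 1) 1 (!p) := by
  refine (h.step true false ?_ ?_).cast' ?_ ?_ <;> simp [ht, okg, gv, lv, rv, hr]

theorem stepE2 (h : Reach τ d m0 q0 j r p) (ht : τ (j + 1) = VT.E) (hr : r ≠ 1) :
    Reach τ d m0 q0 (j + 1) 2 (!p) := by
  refine (h.step true true ?_ ?_).cast' ?_ ?_ <;> simp [ht, okg, gv, lv, rv, hr]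

theorem stepF1 (h : Reach τ d m0 q0 j r p) (ht : τ (j + 1) = VT.F) (hr : r ≠ 1) :
    Reach τ d m0 q0 (j + 1) 1 (!p) := by
  refine (h.step true false ?_ ?_).cast' ?_ ?_ <;> simp [ht, okg, gv, lv, rv, hr]

theorem stepF2 (h : Reach τ d m0 q0 j r p) (ht : τ (j + 1) = VT.F) (hr : r ≠ 2) :
    Reach τ d m0 q0 (j + 1) 2 p := by
  refine (h.step false false ?_ ?_).cast' ?_ ?_ <;> simp [ht, okg, gv, lv, rv, hr]

theorem stepO2 (h : Reach τ d m0 q0 j r p) (ht : τ (j + 1) = VT.O ∨ τ (j + 1) = VT.P) (hr : r ≠ 2) :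
    Reach τ d m0 q0 (j + 1) 2 p := by
  rcases ht with ht | ht <;>
  refine (h.step false true ?_ ?_).cast' ?_ ?_ <;> simp [ht, okg, gv, lv, rv, hr]

theorem stepO3 (h : Reach τ d m0 q0 j r p) (ht : τ (j + 1) = VT.O ∨ τ (j + 1) = VT.P) (hr : r ≠ 3) :
    Reach τ d m0 q0 (j + 1) 3 p := by
  rcases ht with ht | ht <;>
  refine (h.step false false ?_ ?_).cast' ?_ ?_ <;> simp [ht, okg, gv, lv, rv, hr]

end

/-- Two partial solutions can be continued in parallel. -/
theorem parallel {τ : ℕ → VT} {d m0 q0 d' m0' q0' : Bool} (x : Bool) (j : ℕ) (hj : 1 ≤ j)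
    (h0 : ∃ p, Reach τ d m0 q0 0 1 p ∧
      (Reach τ d' m0' q0' 0 1 (xor x p) ∨ Reach τ d' m0' q0' 0 3 (xor x p))) :
    ∃ r p, Reach τ d m0 q0 j r p ∧ Reach τ d' m0' q0' j r (xor x p) ∧
      ((τ j = VT.O ∨ τ j = VT.P) → r = 2 ∨ r = 3) := by
  induction j, hj using Nat.le_induction with
  | base =>
    obtain ⟨p, h, h'⟩ := h0
    obtain ⟨r', h', hr'⟩ : ∃ r', Reach τ d' m0' q0' 0 r' (xor x p) ∧ r' ≠ 2 := by
      rcases h' with h' | h'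
      · exact ⟨_, h', by simp⟩
      · exact ⟨_, h', by simp⟩
    rcases ht : τ (0 + 1) with _ | _ | _ | _
    · exact ⟨_, _, stepF2 h ht (by simp), stepF2 h' ht hr', by simp⟩
    · exact ⟨_, _, stepO2 h (Or.inl ht) (by simp), stepO2 h' (Or.inl ht) hr', by simp⟩
    · exact ⟨_, _, stepO2 h (Or.inr ht) (by simp), stepO2 h' (Or.inr ht) hr', by simp⟩
    · exact ⟨_, _, stepE1 h ht (by simp), (stepE1 h' ht hr').cast' rfl (by simp), by simp_all⟩
  | succ j hj ih =>
    obtain ⟨r, p, h, h', -⟩ := ih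
    by_cases hr : r = 2
    · have hr1 : r ≠ 1 := by omega
      have hr3 : r ≠ 3 := by omega
      rcases ht : τ (j + 1) with _ | _ | _ | _
      · exact ⟨_, _, stepF1 h ht hr1, (stepF1 h' ht hr1).cast' rfl (by simp), by simp_all⟩
      · exact ⟨_, _, stepO3 h (Or.inl ht) hr3, stepO3 h' (Or.inl ht) hr3, by simp⟩
      · exact ⟨_, _, stepO3 h (Or.inr ht) hr3, stepO3 h' (Or.inr ht) hr3, by simp⟩
      · exact ⟨_, _, stepE2 h ht hr1, (stepE2 h' ht hr1).cast' rfl (by simp), by simp_all⟩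
    · rcases ht : τ (j + 1) with _ | _ | _ | _
      · exact ⟨_, _, stepF2 h ht hr, stepF2 h' ht hr, by simp_all⟩
      · exact ⟨_, _, stepO2 h (Or.inl ht) hr, stepO2 h' (Or.inl ht) hr, by simp⟩
      · exact ⟨_, _, stepO2 h (Or.inr ht) hr, stepO2 h' (Or.inr ht) hr, by simp⟩
      · exact ⟨_, _, stepE1 h ht hr, (stepE1 h' ht hr).cast' rfl (by simp), by simp_all⟩

/-- all vertices of type `E` -/
theorem sol_allE {N : ℕ} (τ : ZMod (N + 3) → VT) (h : ∀ i, τ i = VT.E) : Sol τ := by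
  have key : ∀ (d : Bool) (j : ℕ),
      Reach (fun i => τ (i : ZMod (N+3))) d true true j 2 (decide (j % 2 = 0)) := by
    intro d j
    induction j with
    | zero =>
      refine (Reach.start _ d true true ?_).cast' ?_ ?_ <;> cases d <;> simp [h, okg, gv, lv, rv]
    | succ j ih =>
      refine (stepE2 ih (h _) (by simp)).cast' rfl ?_
      rcases Nat.mod_two_eq_zero_or_one j with hj | hj
      · have : (j + 1) % 2 = 1 := by omega
        simp [hj, this]
      · have : (j + 1) % 2 = 0 := by omega
        simp [hj, this]
  rcases Nat.mod_two_eq_zero_or_one (N + 1) with hN | hN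
  · refine close τ (key false (N + 1)) true true ?_ ?_ ?_ ?_ <;> simp [h, okg, gv, lv, rv, hN]
  · refine close τ (key true (N + 1)) false false ?_ ?_ ?_ ?_ <;> simp [h, okg, gv, lv, rv, hN]

/-- some vertex of type `E` -/
theorem sol_E {N : ℕ} (τ : ZMod (N + 3) → VT) (h : ∃ i, τ i = VT.E) : Sol τ := by
  by_cases hall : ∀ i, τ i = VT.E
  · exact sol_allE τ hall
  push Not at hall
  obtain ⟨i, hi, hi'⟩ := exists_switch (fun i => τ i = VT.E) h hall
  apply Sol.rot τ (i + 1)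
  generalize hτ : (fun k => τ (k + (i + 1))) = σ
  have s0 : σ 0 ≠ VT.E := by rw [← hτ]; simpa using hi'
  have s1 : σ (-1) = VT.E := by
    rw [← hτ]; simp only []
    have : -1 + (i + 1) = i := by ring
    rw [this, hi]
  have st1 : Reach (fun i => σ (i : ZMod (N+3))) true true false 0 1 true := by
    refine (Reach.start _ true true false ?_).cast' ?_ ?_ <;>
      rcases hs : σ 0 with _ | _ | _ | _ <;> simp_all [okg, gv, lv, rv]
  have st2 : Reach (fun i => σ (i : ZMod (N+3))) true false true 0 3 false := by
    refine (Reach.start _ true false true ?_).cast' ?_ ?_ <;>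
      rcases hs : σ 0 with _ | _ | _ | _ <;> simp_all [okg, gv, lv, rv]
  obtain ⟨r, p, h1, h2, -⟩ := parallel (τ := fun i => σ (i : ZMod (N+3))) true (N + 1) (by omega)
    ⟨true, st1, Or.inr st2⟩
  have hr : r ≠ 4 → (Sol σ) := by
    intro hr
    cases p
    · refine close σ h1 false false ?_ ?_ ?_ ?_ <;> rcases hs : σ 0 with _ | _ | _ | _ <;> simp_all [okg, gv, lv, rv]
    · refine close σ h2 false false ?_ ?_ ?_ ?_ <;> rcases hs : σ 0 with _ | _ | _ | _ <;> simp_all [okg, gv, lv, rv]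
  apply hr
  obtain ⟨m, q, -, -, -, -, hh, -⟩ := h1
  rw [← hh]
  have hN : ¬ (N + 1 = 0) := by omega
  simp only [hN, decide_false, Bool.and_false, rv]
  cases m (N + 1) <;> simp <;> split_ifs <;> omega

theorem sol_allO_P {N : ℕ} (τ : ZMod (N + 3) → VT) (h : ∀ i, τ i = VT.O ∨ τ i = VT.P)
    (hP : ∃ i, τ i = VT.P) : Sol τ := by
  obtain ⟨i, hi⟩ := hP
  apply Sol.rot τ (i + 1)
  have hσ : ∀ k, τ (k + (i + 1)) = VT.O ∨ τ (k + (i + 1)) = VT.P := fun k => h _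
  have s1 : τ (-1 + (i + 1)) = VT.P := by
    have : -1 + (i + 1) = i := by ring
    rw [this, hi]
  generalize hτ : (fun k => τ (k + (i + 1))) = σ
  have hσ' : ∀ k, σ k = VT.O ∨ σ k = VT.P := by rw [← hτ]; exact hσ
  have s1' : σ (-1) = VT.P := by rw [← hτ]; exact s1
  have key : ∀ (j : ℕ), ∃ r, (r = 2 ∨ r = 3) ∧
      Reach (fun i => σ (i : ZMod (N+3))) true false true j r false := by
    intro j
    induction j with
    | zero =>
      refine ⟨3, Or.inr rfl, ?_⟩
      refine (Reach.start _ true false true ?_).cast' ?_ ?_ <;> rcases hσ' 0 with h | h <;> simp [h, okg, gv, lv, rv]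
    | succ j ih =>
      obtain ⟨r, rfl | rfl, ih⟩ := ih
      · exact ⟨3, Or.inr rfl, stepO3 ih (hσ' _) (by simp)⟩
      · exact ⟨2, Or.inl rfl, stepO2 ih (hσ' _) (by simp)⟩
  obtain ⟨r, hr, h1⟩ := key (N + 1)
  have hr4 : r ≠ 4 := by omega
  refine close σ h1 false false ?_ ?_ ?_ ?_ <;> rcases hσ' 0 with h | h <;> simp [s1', hr4, h, okg, gv, lv, rv]

/-- no `E`, two consecutive bridge vertices, some `F` -/
theorem sol_OO {N : ℕ} (τ : ZMod (N + 3) → VT) (hE : ∀ i, τ i ≠ VT.E) (hF : ∃ i, τ i = VT.F)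
    (hOO : ∃ i, τ i ≠ VT.F ∧ τ (i + 1) ≠ VT.F) : Sol τ := by
  obtain ⟨i, ⟨hi1, hi2⟩, hi'⟩ := exists_switch (fun i => τ i ≠ VT.F ∧ τ (i - 1) ≠ VT.F)
    (by obtain ⟨i, h1, h2⟩ := hOO; exact ⟨i + 1, h2, by simpa using h1⟩)
    (by obtain ⟨i, h⟩ := hF; exact ⟨i, by simp [h]⟩)
  have hi3 : τ (i + 1) = VT.F := by
    by_contra h
    exact hi' ⟨h, by simpa using hi1⟩
  apply Sol.rot τ (i + 1)
  generalize hτ : (fun k => τ (k + (i + 1))) = σ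
  have s0 : σ 0 = VT.F := by rw [← hτ]; simpa using hi3
  have hσE : ∀ k, σ k ≠ VT.E := by intro k; rw [← hτ]; exact hE _
  have s1 : σ (-1) = VT.O ∨ σ (-1) = VT.P := by
    have : σ (-1) ≠ VT.F := by
      rw [← hτ]; simp only []
      have : -1 + (i + 1) = i := by ring
      rwa [this]
    have h2 := hσE (-1)
    rcases hs : σ (-1) with _ | _ | _ | _ <;> simp_all
  have hneg : ((N + 1 : ℕ) : ZMod (N+3)) = -2 := by
    have : ((N + 3 : ℕ) : ZMod (N+3)) = 0 := ZMod.natCast_self _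
    push_cast at this ⊢
    linear_combination this
  have s2 : σ ((N + 1 : ℕ) : ZMod (N+3)) = VT.O ∨ σ ((N + 1 : ℕ) : ZMod (N+3)) = VT.P := by
    have : σ (-2) ≠ VT.F := by
      rw [← hτ]; simp only []
      have : -2 + (i + 1) = i - 1 := by ring
      rwa [this]
    rw [hneg]
    have h2 := hσE (-2)
    rcases hs : σ (-2) with _ | _ | _ | _ <;> simp_all
  have st1 : Reach (fun i => σ (i : ZMod (N+3))) true true false 0 1 true := by
    refine (Reach.start _ true true false ?_).cast' ?_ ?_ <;> simp [s0, okg, gv, lv, rv]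
  have st2 : Reach (fun i => σ (i : ZMod (N+3))) false true false 0 1 true := by
    refine (Reach.start _ false true false ?_).cast' ?_ ?_ <;> simp [s0, okg, gv, lv, rv]
  obtain ⟨r, p, h1, h2, hr⟩ := parallel (τ := fun i => σ (i : ZMod (N+3))) false (N + 1) (by omega)
    ⟨true, st1, Or.inl st2⟩
  rcases hr s2 with rfl | rfl
  · cases p
    · refine close σ h1 false true ?_ ?_ ?_ ?_ <;> rcases s1 with s1 | s1 <;> simp [s0, s1, okg, gv, lv, rv]
    · refine close σ h1 true true ?_ ?_ ?_ ?_ <;> rcases s1 with s1 | s1 <;> simp [s0, s1, okg, gv, lv, rv]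
  · cases p
    · refine close σ h2 false true ?_ ?_ ?_ ?_ <;> rcases s1 with s1 | s1 <;> simp [s0, s1, okg, gv, lv, rv]
    · refine close σ h1 true true ?_ ?_ ?_ ?_ <;> rcases s1 with s1 | s1 <;> simp [s0, s1, okg, gv, lv, rv]

/-- no `E`, no two consecutive bridge vertices, some bridge vertex -/
theorem sol_iso {N : ℕ} (τ : ZMod (N + 3) → VT) (hE : ∀ i, τ i ≠ VT.E) (hO : ∃ i, τ i ≠ VT.F)
    (hOO : ∀ i, τ i = VT.F ∨ τ (i + 1) = VT.F) : Sol τ := by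
  obtain ⟨i, hi⟩ := hO
  apply Sol.rot τ (i + 1)
  generalize hτ : (fun k => τ (k + (i + 1))) = σ
  have hσE : ∀ k, σ k ≠ VT.E := by intro k; rw [← hτ]; exact hE _
  have hσO : ∀ k, σ k = VT.F ∨ σ (k + 1) = VT.F := by
    intro k; rw [← hτ]; simp only []
    have : k + 1 + (i + 1) = k + (i + 1) + 1 := by ring
    rw [this]; exact hOO _
  have s1' : σ (-1) ≠ VT.F := by
    rw [← hτ]; simp only []
    have : -1 + (i + 1) = i := by ring
    rwa [this]
  have s1 : σ (-1) = VT.O ∨ σ (-1) = VT.P := by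
    have h2 := hσE (-1)
    rcases hs : σ (-1) with _ | _ | _ | _ <;> simp_all
  have s0 : σ 0 = VT.F := by
    have := hσO (-1)
    rw [neg_add_cancel] at this
    exact this.resolve_left s1'
  have s2 : σ ((N + 1 : ℕ) : ZMod (N+3)) = VT.F := by
    have hneg : ((N + 1 : ℕ) : ZMod (N+3)) = -2 := by
      have : ((N + 3 : ℕ) : ZMod (N+3)) = 0 := ZMod.natCast_self _
      push_cast at this ⊢
      linear_combination this
    rw [hneg]
    have := hσO (-2)
    have e : (-2 : ZMod (N+3)) + 1 = -1 := by ring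
    rw [e] at this
    exact this.resolve_right s1'
  have key : ∀ j : ℕ,
      (σ (j : ZMod (N+3)) ≠ VT.F ∧ (∃ m p, Reach (fun i => σ (i : ZMod (N+3))) false m false j 3 p) ∧
        (∃ p, Reach (fun i => σ (i : ZMod (N+3))) true true false j 3 p)) ∨
      (σ (j : ZMod (N+3)) = VT.F ∧
        (∃ p, (∃ m, Reach (fun i => σ (i : ZMod (N+3))) false m false j 1 p) ∧
          (∃ m, Reach (fun i => σ (i : ZMod (N+3))) false m false j 2 (!p))) ∧
        (∃ p, Reach (fun i => σ (i : ZMod (N+3))) true true false j 1 p)) ∨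
      (σ (j : ZMod (N+3)) = VT.F ∧
        (∃ p, (∃ m, Reach (fun i => σ (i : ZMod (N+3))) false m false j 1 p) ∧
          (∃ m, Reach (fun i => σ (i : ZMod (N+3))) false m false j 2 p)) ∧
        (∃ p, Reach (fun i => σ (i : ZMod (N+3))) true true false j 2 p)) := by
    intro j
    induction j with
    | zero =>
      right; left
      refine ⟨by simpa using s0, ⟨true, ⟨true, ?_⟩, ⟨false, ?_⟩⟩, ⟨true, ?_⟩⟩
      · refine (Reach.start _ false true false ?_).cast' ?_ ?_ <;> simp [s0, okg, gv, lv, rv]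
      · refine (Reach.start _ false false false ?_).cast' ?_ ?_ <;> simp [s0, okg, gv, lv, rv]
      · refine (Reach.start _ true true false ?_).cast' ?_ ?_ <;> simp [s0, okg, gv, lv, rv]
    | succ j ih =>
      by_cases hF : σ ((j + 1 : ℕ) : ZMod (N+3)) = VT.F
      · rcases ih with ⟨h0, ⟨m, p, h⟩, ⟨p', h'⟩⟩ | ⟨h0, ⟨p, ⟨m1, h1⟩, m2, h2⟩, p', h'⟩ | ⟨h0, ⟨p, ⟨m1, h1⟩, m2, h2⟩, p', h'⟩
        · right; left
          exact ⟨hF, ⟨_, ⟨m, stepF1 h hF (by simp)⟩, ⟨m, (stepF2 h hF (by simp)).cast' rfl (by simp)⟩⟩,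
            ⟨_, stepF1 h' hF (by simp)⟩⟩
        · right; right
          exact ⟨hF, ⟨_, ⟨m2, stepF1 h2 hF (by simp)⟩, ⟨m1, (stepF2 h1 hF (by simp)).cast' rfl (by simp)⟩⟩,
            ⟨_, stepF2 h' hF (by simp)⟩⟩
        · right; left
          exact ⟨hF, ⟨_, ⟨m2, stepF1 h2 hF (by simp)⟩, ⟨m1, (stepF2 h1 hF (by simp)).cast' rfl (by simp)⟩⟩,
            ⟨_, stepF1 h' hF (by simp)⟩⟩
      · have hO : σ ((j + 1 : ℕ) : ZMod (N+3)) = VT.O ∨ σ ((j + 1 : ℕ) : ZMod (N+3)) = VT.P := by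
          have h2 := hσE ((j + 1 : ℕ) : ZMod (N+3))
          rcases hs : σ ((j + 1 : ℕ) : ZMod (N+3)) with _ | _ | _ | _ <;> simp_all
        left
        rcases ih with ⟨h0, -⟩ | ⟨h0, ⟨p, ⟨m1, h1⟩, m2, h2⟩, p', h'⟩ | ⟨h0, ⟨p, ⟨m1, h1⟩, m2, h2⟩, p', h'⟩
        · exfalso
          rcases hσO j with h | h
          · exact h0 h
          · apply hF; push_cast; exact h
        · exact ⟨hF, ⟨m1, _, stepO3 h1 hO (by simp)⟩, ⟨_, stepO3 h' hO (by simp)⟩⟩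
        · exact ⟨hF, ⟨m1, _, stepO3 h1 hO (by simp)⟩, ⟨_, stepO3 h' hO (by simp)⟩⟩
  rcases key (N + 1) with ⟨h0, -⟩ | ⟨h0, ⟨p, ⟨m1, h1⟩, m2, h2⟩, p', h'⟩ | ⟨h0, -, p', h'⟩
  · exact absurd s2 h0
  · cases p
    · refine close σ h1 false false ?_ ?_ ?_ ?_ <;> rcases s1 with s1 | s1 <;> cases m1 <;> simp [s0, s1, okg, gv, lv, rv]
    · refine close σ h2 false false ?_ ?_ ?_ ?_ <;> rcases s1 with s1 | s1 <;> cases m2 <;> simp [s0, s1, okg, gv, lv, rv]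
  · cases p'
    · refine close σ h' false true ?_ ?_ ?_ ?_ <;> rcases s1 with s1 | s1 <;> simp [s0, s1, okg, gv, lv, rv]
    · refine close σ h' true true ?_ ?_ ?_ ?_ <;> rcases s1 with s1 | s1 <;> simp [s0, s1, okg, gv, lv, rv]

/-- The cycle lemma. -/
theorem sol_cycle {N : ℕ} (τ : ZMod (N + 3) → VT) (h1 : ∃ i, τ i ≠ VT.F) (h2 : ∃ i, τ i ≠ VT.O) :
    Sol τ := by
  by_cases hE : ∃ i, τ i = VT.E
  · exact sol_E τ hE
  push Not at hE
  by_cases hF : ∃ i, τ i = VT.F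
  · by_cases hOO : ∃ i, τ i ≠ VT.F ∧ τ (i + 1) ≠ VT.F
    · exact sol_OO τ hE hF hOO
    · push Not at hOO
      refine sol_iso τ hE h1 ?_
      intro i
      by_cases h : τ i = VT.F
      · exact Or.inl h
      · exact Or.inr (hOO i h)
  · push Not at hF
    have hall : ∀ i, τ i = VT.O ∨ τ i = VT.P := by
      intro i
      have a := hE i
      have b := hF i
      rcases hs : τ i with _ | _ | _ | _ <;> simp_all
    obtain ⟨i, hi⟩ := h2
    exact sol_allO_P τ hall ⟨i, (hall i).resolve_left hi⟩

end DL

namespace DL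

variable {V : Type*} [Fintype V]

/-- The graph of bridges. -/
def Bg (G : SimpleGraph V) : SimpleGraph V where
  Adj u v := G.Adj u v ∧ G.IsBridge s(u, v)
  symm := ⟨fun u v h => ⟨h.1.symm, by rw [Sym2.eq_swap]; exact h.2⟩⟩
  loopless := ⟨fun u h => G.loopless.irrefl u h.1⟩

/-- The graph of non-bridges. -/
def Hg (G : SimpleGraph V) : SimpleGraph V where
  Adj u v := G.Adj u v ∧ ¬ G.IsBridge s(u, v)
  symm := ⟨fun u v h => ⟨h.1.symm, by rw [Sym2.eq_swap]; exact h.2⟩⟩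
  loopless := ⟨fun u h => G.loopless.irrefl u h.1⟩

/-- The vertices on cycles. -/
def onC (G : SimpleGraph V) (v : V) : Prop := ∃ w, (Hg G).Adj v w

/-- Structural hypotheses. -/
structure Cac (G : SimpleGraph V) : Prop where
  conn : G.Connected
  cactus : ∀ (e : Sym2 V) (u v : V) (p : G.Walk u u) (q : G.Walk v v),
      p.IsCycle → q.IsCycle → e ∈ p.edges → e ∈ q.edges →
      ∀ f : Sym2 V, f ∈ p.edges ↔ f ∈ q.edges
  deg3 : ∀ v, ndeg G v ≤ 3
  deg3cyc : ∀ v, ndeg G v = 3 → ∃ (u : V) (p : G.Walk u u), p.IsCycle ∧ v ∈ p.support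

variable {G : SimpleGraph V}

theorem adj_cases {u v : V} (h : G.Adj u v) : (Bg G).Adj u v ∨ (Hg G).Adj u v := by
  by_cases hb : G.IsBridge s(u, v)
  · exact Or.inl ⟨h, hb⟩
  · exact Or.inr ⟨h, hb⟩

theorem cyc_of_H {v w : V} (h : (Hg G).Adj v w) :
    ∃ (u : V) (p : G.Walk u u), p.IsCycle ∧ s(v, w) ∈ p.edges := by
  apply SimpleGraph.adj_and_reachable_delete_edges_iff_exists_cycle.1
  refine ⟨h.1, ?_⟩
  have := h.2
  rw [SimpleGraph.isBridge_iff, not_not] at this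
  exact this

theorem H_of_cyc {u v w : V} {p : G.Walk u u} (hp : p.IsCycle) (h : s(v, w) ∈ p.edges) :
    (Hg G).Adj v w :=
  ⟨p.adj_of_mem_edges h, fun hb => hb.notMem_edges_of_isCycle hp h⟩

theorem three_le_ndeg {v a b c : V} (ha : G.Adj v a) (hb : G.Adj v b) (hc : G.Adj v c)
    (hab : a ≠ b) (hac : a ≠ c) (hbc : b ≠ c) : 3 ≤ ndeg G v := by
  have : ({a, b, c} : Set V).ncard = 3 := by
    rw [Set.ncard_eq_three]
    exact ⟨a, b, c, hab, hac, hbc, rfl⟩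
  rw [← this, ndeg]
  apply Set.ncard_le_ncard _ (Set.toFinite _)
  rintro x (rfl | rfl | rfl) <;> assumption

theorem four_le_ndeg {v a b c d : V} (ha : G.Adj v a) (hb : G.Adj v b) (hc : G.Adj v c)
    (hd : G.Adj v d) (hab : a ≠ b) (hac : a ≠ c) (hbc : b ≠ c) (had : a ≠ d) (hbd : b ≠ d)
    (hcd : c ≠ d) : 4 ≤ ndeg G v := by
  have h3 : ({b, c, d} : Set V).ncard = 3 := by
    rw [Set.ncard_eq_three]
    exact ⟨b, c, d, hbc, hbd, hcd, rfl⟩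
  have : (insert a ({b, c, d} : Set V)).ncard = 4 := by
    rw [Set.ncard_insert_of_notMem _ (Set.toFinite _), h3]
    simp [hab, hac, had]
  rw [← this, ndeg]
  apply Set.ncard_le_ncard _ (Set.toFinite _)
  rintro x (rfl | rfl | rfl | rfl) <;> assumption

theorem cyc_nbrs {u v : V} {p : G.Walk u u} (hp : p.IsCycle) (hv : v ∈ p.support) :
    ∃ a b, a ≠ b ∧ ∀ z, s(v, z) ∈ p.edges ↔ z = a ∨ z = b := by
  have h2 := hp.ncard_neighborSet_toSubgraph_eq_two hv
  obtain ⟨a, b, hab, h⟩ := Set.ncard_eq_two.1 h2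
  refine ⟨a, b, hab, fun z => ?_⟩
  rw [← SimpleGraph.Walk.adj_toSubgraph_iff_mem_edges]
  have : z ∈ p.toSubgraph.neighborSet v ↔ z ∈ ({a, b} : Set V) := by rw [h]
  simpa using this

theorem H_iff (hG : Cac G) {u v : V} {p : G.Walk u u} (hp : p.IsCycle) (hv : v ∈ p.support)
    (z : V) : (Hg G).Adj v z ↔ s(v, z) ∈ p.edges := by
  refine ⟨fun h => ?_, H_of_cyc hp⟩
  obtain ⟨a, b, hab, hz⟩ := cyc_nbrs hp hv
  obtain ⟨u', q, hq, hqe⟩ := cyc_of_H h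
  obtain ⟨a', b', hab', hz'⟩ := cyc_nbrs hq (q.fst_mem_support_of_mem_edges hqe)
  by_cases hshare : ∃ x, s(v, x) ∈ p.edges ∧ s(v, x) ∈ q.edges
  · obtain ⟨x, hx1, hx2⟩ := hshare
    exact (hG.cactus _ _ _ p q hp hq hx1 hx2 _).2 hqe
  · exfalso
    push Not at hshare
    have ha := (hz a).2 (Or.inl rfl)
    have hb := (hz b).2 (Or.inr rfl)
    have ha' := (hz' a').2 (Or.inl rfl)
    have hb' := (hz' b').2 (Or.inr rfl)
    have := four_le_ndeg (p.adj_of_mem_edges ha) (p.adj_of_mem_edges hb)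
      (q.adj_of_mem_edges ha') (q.adj_of_mem_edges hb') hab
      (by rintro rfl; exact hshare _ ha ha') (by rintro rfl; exact hshare _ hb ha')
      (by rintro rfl; exact hshare _ ha hb') (by rintro rfl; exact hshare _ hb hb') hab'
    have := hG.deg3 v
    omega

theorem H_nbrs (hG : Cac G) {v : V} (hv : onC G v) :
    ∃ a b, a ≠ b ∧ ∀ z, (Hg G).Adj v z ↔ z = a ∨ z = b := by
  obtain ⟨w, hw⟩ := hv
  obtain ⟨u, p, hp, he⟩ := cyc_of_H hw
  have hs := p.fst_mem_support_of_mem_edges he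
  obtain ⟨a, b, hab, hz⟩ := cyc_nbrs hp hs
  exact ⟨a, b, hab, fun z => by rw [H_iff hG hp hs, hz]⟩

theorem onC_of_support {u v : V} {p : G.Walk u u} (hp : p.IsCycle) (hv : v ∈ p.support) :
    onC G v := by
  obtain ⟨a, b, hab, hz⟩ := cyc_nbrs hp hv
  exact ⟨a, H_of_cyc hp ((hz a).2 (Or.inl rfl))⟩

theorem not_B_H {u v : V} (h1 : (Bg G).Adj u v) (h2 : (Hg G).Adj u v) : False := h2.2 h1.2

/-- a cycle vertex has at most one bridge -/
theorem B_unique (hG : Cac G) {v w w' : V} (hv : onC G v) (h : (Bg G).Adj v w)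
    (h' : (Bg G).Adj v w') : w = w' := by
  by_contra hne
  obtain ⟨a, b, hab, hz⟩ := H_nbrs hG hv
  have ha := (hz a).2 (Or.inl rfl)
  have hb := (hz b).2 (Or.inr rfl)
  have := four_le_ndeg ha.1 hb.1 h.1 h'.1 hab (by rintro rfl; exact not_B_H h ha)
    (by rintro rfl; exact not_B_H h hb) (by rintro rfl; exact not_B_H h' ha)
    (by rintro rfl; exact not_B_H h' hb) hne
  have := hG.deg3 v
  omega

theorem ndeg_le_two (hG : Cac G) {v : V} (hv : ¬ onC G v) : ndeg G v ≤ 2 := by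
  by_contra h
  have h3 : ndeg G v = 3 := by have := hG.deg3 v; omega
  obtain ⟨u, p, hp, hs⟩ := hG.deg3cyc v h3
  exact hv (onC_of_support hp hs)

/-- two bridges at a vertex are everything -/
theorem B_two (hG : Cac G) {v w w' z : V} (h : (Bg G).Adj v w)
    (h' : (Bg G).Adj v w') (hne : w ≠ w') (hz : G.Adj v z) : z = w ∨ z = w' := by
  have hv : ¬ onC G v := fun hv => hne (B_unique hG hv h h')
  by_contra hcon
  push Not at hcon
  have := three_le_ndeg h.1 h'.1 hz hne hcon.1.symm hcon.2.symm
  have := ndeg_le_two hG hv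
  omega

theorem two_le_ndeg_of_onC (hG : Cac G) {v : V} (hv : onC G v) : 2 ≤ ndeg G v := by
  obtain ⟨a, b, hab, hz⟩ := H_nbrs hG hv
  rw [← Set.ncard_pair hab, ndeg]
  apply Set.ncard_le_ncard _ (Set.toFinite _)
  rintro x (rfl | rfl)
  · exact ((hz _).2 (Or.inl rfl)).1
  · exact ((hz _).2 (Or.inr rfl)).1

/-- enumeration of a cycle -/
theorem exists_enum (hG : Cac G) {v : V} (hv : onC G v) :
    ∃ (N : ℕ) (f : ZMod (N + 3) → V), Function.Injective f ∧ (∃ i, f i = v) ∧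
      ∀ i w, (Hg G).Adj (f i) w ↔ w = f (i - 1) ∨ w = f (i + 1) := by
  obtain ⟨w, hw⟩ := hv
  obtain ⟨u, p, hp, he⟩ := cyc_of_H hw
  have hs := p.fst_mem_support_of_mem_edges he
  have hl := hp.three_le_length
  obtain ⟨N, hN⟩ : ∃ N, p.length = N + 3 := ⟨p.length - 3, by omega⟩
  have vlt : ∀ i : ZMod (N+3), i.val < N + 3 := fun i => ZMod.val_lt i
  have hinj : Function.Injective (fun i : ZMod (N+3) => p.getVert i.val) := by
    intro i j hij
    apply ZMod.val_injective
    apply hp.getVert_injOn' _ _ hij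
    · have := vlt i; simp only [Set.mem_ofPred_eq]; omega
    · have := vlt j; simp only [Set.mem_ofPred_eq]; omega
  have hcast : ∀ k : ℕ, k ≤ N + 3 → p.getVert (k : ZMod (N+3)).val = p.getVert k := by
    intro k hk
    rcases Nat.lt_or_eq_of_le hk with h | h
    · rw [ZMod.val_natCast_of_lt h]
    · rw [h, ZMod.natCast_self, ZMod.val_zero, ← hN]
      simp
  have hsucc : ∀ i : ZMod (N+3), (Hg G).Adj (p.getVert i.val) (p.getVert (i + 1).val) := by
    intro i
    have h1 : p.getVert (i + 1).val = p.getVert (i.val + 1) := by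
      rw [← hcast (i.val + 1) (by have := vlt i; omega)]
      simp
    rw [h1]
    apply H_of_cyc hp
    rw [← SimpleGraph.Walk.adj_toSubgraph_iff_mem_edges]
    exact p.toSubgraph_adj_getVert (by have := vlt i; omega)
  refine ⟨N, fun i => p.getVert i.val, hinj, ?_, ?_⟩
  · obtain ⟨k, hk, hkl⟩ := SimpleGraph.Walk.mem_support_iff_exists_getVert.1 hs
    exact ⟨k, by rw [← hk]; exact hcast k (by omega)⟩
  · intro i w
    have h1 := hsucc i
    have h2 := (hsucc (i - 1)).symm
    rw [sub_add_cancel] at h2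
    have hne : p.getVert (i - 1).val ≠ p.getVert (i + 1).val := by
      intro h
      have := hinj h
      have h2 : (2 : ZMod (N+3)) = 0 := by linear_combination -this
      have h3 : ((2 : ℕ) : ZMod (N+3)) = 0 := by exact_mod_cast h2
      rw [ZMod.natCast_eq_zero_iff] at h3
      have := Nat.le_of_dvd (by norm_num) h3
      omega
    obtain ⟨a, b, hab, hz⟩ := H_nbrs hG ⟨_, h1⟩
    rw [hz] at h1 h2
    show (Hg G).Adj (p.getVert i.val) w ↔ _
    rw [hz]
    constructor
    · rintro (rfl | rfl) <;> rcases h1 with h1 | h1 <;> rcases h2 with h2 | h2 <;> simp_all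
    · rintro (rfl | rfl)
      · exact h2
      · exact h1

/-- potentials with prescribed differences across bridges -/
theorem potential (G : SimpleGraph V) (f : V → V → Bool) (hf : ∀ u v, f u v = f v u)
    (s : Finset (Sym2 V)) (hs : ∀ e ∈ s, e ∈ G.edgeSet ∧ G.IsBridge e) :
    ∃ h : V → Bool, (∀ u v, s(u, v) ∈ s → xor (h u) (h v) = f u v) ∧
      (∀ u v, G.Adj u v → s(u, v) ∉ s → h u = h v) := by
  induction s using Finset.induction_on with
  | empty => exact ⟨fun _ => false, by simp, by simp⟩
  | insert e s hes ih =>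
    obtain ⟨h, h1, h2⟩ := ih (fun e he => hs e (Finset.mem_insert_of_mem he))
    have hb := (hs e (Finset.mem_insert_self _ _)).2
    induction e using Sym2.ind with
    | _ a b =>
    rw [SimpleGraph.isBridge_iff] at hb
    set G' := G.deleteEdges {s(a, b)} with hG'
    have hstay : ∀ u v, G.Adj u v → s(u, v) ≠ s(a, b) → (G'.Reachable a u ↔ G'.Reachable a v) := by
      intro u v huv hne
      have hadj : G'.Adj u v := by
        rw [hG', SimpleGraph.deleteEdges_adj]
        exact ⟨huv, by simpa using hne⟩
      exact ⟨fun hr => hr.trans hadj.reachable, fun hr => hr.trans hadj.symm.reachable⟩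
    let t : Bool := xor (f a b) (xor (h a) (h b))
    by_cases ht : t = false
    · refine ⟨h, ?_, ?_⟩
      · intro u v huv
        rw [Finset.mem_insert] at huv
        rcases huv with huv | huv
        · have : f a b = xor (h a) (h b) := by
            simp only [t] at ht
            revert ht; cases f a b <;> cases h a <;> cases h b <;> simp
          rw [Sym2.eq_iff] at huv
          rcases huv with ⟨rfl, rfl⟩ | ⟨rfl, rfl⟩
          · exact this.symm
          · rw [Bool.xor_comm, ← this, hf]
        · exact h1 u v huv
      · intro u v huv hne
        exact h2 u v huv (fun hm => hne (Finset.mem_insert_of_mem hm))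
    · have ht' : t = true := by simpa using ht
      have hflip : f a b = !(xor (h a) (h b)) := by
        simp only [t] at ht'
        revert ht'; cases f a b <;> cases h a <;> cases h b <;> simp
      let h' : V → Bool := fun v => xor (h v) (decide (G'.Reachable a v))
      have hda : decide (G'.Reachable a a) = true := by simp
      have hdb : decide (G'.Reachable a b) = false := by simpa using hb
      have hab : xor (h' a) (h' b) = f a b := by
        simp only [h', hda, hdb, hflip]
        cases h a <;> cases h b <;> rfl
      refine ⟨h', ?_, ?_⟩
      · intro u v huv
        rw [Finset.mem_insert] at huv
        by_cases he : s(u, v) = s(a, b)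
        · rw [Sym2.eq_iff] at he
          rcases he with ⟨rfl, rfl⟩ | ⟨rfl, rfl⟩
          · exact hab
          · rw [Bool.xor_comm, hab, hf]
        · have hm := huv.resolve_left he
          have hsame : decide (G'.Reachable a u) = decide (G'.Reachable a v) := by
            have hadj : G.Adj u v := (hs _ (Finset.mem_insert_of_mem hm)).1
            simp [hstay u v hadj he]
          rw [← h1 u v hm]
          simp only [h', hsame]
          cases h u <;> cases h v <;> cases decide (G'.Reachable a v) <;> rfl
      · intro u v huv hne
        rw [Finset.mem_insert, not_or] at hne
        have := h2 u v huv hne.2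
        simp only [h', this]
        simp [hstay u v huv hne.1]

end DL

namespace DL

variable {V : Type*} [Fintype V] {G : SimpleGraph V}

theorem avoid_reach (hc : G.Connected) {r0 r a w : V} (har : a ≠ r)
    (hd : G.dist r0 a ≤ G.dist r0 r) : (G.deleteEdges {s(r, w)}).Reachable r0 a := by
  obtain ⟨p, hp⟩ := hc.exists_walk_length_eq_dist r0 a
  have hr : r ∉ p.support := by
    intro hr
    have h1 := p.length_takeUntil_lt_length hr har.symm
    have h2 := SimpleGraph.dist_le (p.takeUntil r hr)
    omega
  refine ⟨p.toDeleteEdges _ ?_⟩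
  rintro e he (h : e = _)
  subst h
  exact hr (p.fst_mem_support_of_mem_edges he)

theorem exists_root (hG : Cac G) : ∃ r : V, onC G r → ∀ w, ¬ (Bg G).Adj r w := by
  haveI := hG.conn.nonempty
  let r0 : V := Classical.arbitrary V
  obtain ⟨r, hr⟩ := Finite.exists_max (fun v => G.dist r0 v)
  refine ⟨r, ?_⟩
  rintro ⟨a, ha⟩ w hw
  have hb := hw.2
  rw [SimpleGraph.isBridge_iff] at hb
  apply hb
  have haw : a ≠ w := by
    rintro rfl
    exact not_B_H hw ha
  have h1 : (G.deleteEdges {s(r, w)}).Adj r a := by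
    rw [SimpleGraph.deleteEdges_adj]
    refine ⟨ha.1, ?_⟩
    intro h
    rw [Set.mem_singleton_iff, Sym2.eq_iff] at h
    rcases h with h | h
    · exact haw h.2
    · exact haw (h.2.trans h.1)
  exact h1.reachable.trans
    ((avoid_reach hG.conn ha.1.ne.symm (hr a)).symm.trans
      (avoid_reach hG.conn hw.1.ne.symm (hr w)))

theorem Breach_leaf_of_onC (hG : Cac G) {v w x : V} (hv : onC G v) (hw : onC G w)
    (h : (Bg G).Adj v w) (hx : (Bg G).Reachable v x) : x = v ∨ x = w := by
  obtain ⟨p⟩ := hx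
  induction p generalizing w with
  | nil => exact Or.inl rfl
  | cons hadj p ih =>
    have := B_unique hG hv h hadj
    subst this
    exact (ih hw hv h.symm).symm

theorem leaf_unique_nbr {v a b : V} (h : ndeg G v = 1) (ha : G.Adj v a) (hb : G.Adj v b) :
    a = b := by
  unfold ndeg at h
  obtain ⟨x, hx⟩ := Set.ncard_eq_one.1 h
  have h1 : a ∈ {w | G.Adj v w} := ha
  have h2 : b ∈ {w | G.Adj v w} := hb
  rw [hx] at h1 h2
  exact h1.trans h2.symm

theorem leaves_ne (hG : Cac G) (hcyc : ∃ v, onC G v) {x y : V} (hx : ndeg G x = 1)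
    (hy : ndeg G y = 1) (h : (Bg G).Reachable x y) : x = y := by
  by_contra hne
  obtain ⟨p0⟩ := h
  obtain ⟨p, hp⟩ : ∃ p : (Bg G).Walk x y, p.IsPath := ⟨p0.bypass, p0.bypass_isPath⟩
  have hlen : 0 < p.length := by
    rw [Nat.pos_iff_ne_zero]
    intro h0
    exact hne (SimpleGraph.Walk.eq_of_length_eq_zero h0)
  have key : ∀ i ≤ p.length, ¬ onC G (p.getVert i) ∧
      ∀ z, G.Adj (p.getVert i) z → z ∈ p.support := by
    intro i hi
    rcases Nat.eq_zero_or_pos i with rfl | hi0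
    · rw [SimpleGraph.Walk.getVert_zero]
      constructor
      · intro h
        have := two_le_ndeg_of_onC hG h
        omega
      · intro z hz
        have h1 := p.adj_getVert_succ hlen
        rw [SimpleGraph.Walk.getVert_zero] at h1
        rw [leaf_unique_nbr hx hz h1.1]
        exact p.getVert_mem_support _
    · obtain ⟨j, rfl⟩ : ∃ j, i = j + 1 := ⟨i - 1, by omega⟩
      have h1 := p.adj_getVert_succ (i := j) (by omega)
      rcases Nat.lt_or_ge (j + 1) p.length with hl | hl
      · have h2 := p.adj_getVert_succ hl
        have hne : p.getVert j ≠ p.getVert (j + 1 + 1) := by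
          intro he
          have := hp.getVert_injOn (by simp; omega) (by simp; omega) he
          omega
        constructor
        · intro h
          exact hne (B_unique hG h h1.symm h2)
        · intro z hz
          rcases B_two hG h1.symm h2 hne hz with rfl | rfl <;> exact p.getVert_mem_support _
      · have he : j + 1 = p.length := by omega
        have hy' : p.getVert (j + 1) = y := by rw [he, SimpleGraph.Walk.getVert_length]
        rw [hy'] at h1 ⊢
        constructor
        · intro h
          have := two_le_ndeg_of_onC hG h
          omega
        · intro z hz
          rw [leaf_unique_nbr hy hz h1.1.symm]
          exact p.getVert_mem_support _
  have all : ∀ v, v ∈ p.support := by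
    intro v
    obtain ⟨q⟩ := hG.conn.preconnected x v
    have : ∀ a b : V, G.Walk a b → a ∈ p.support → b ∈ p.support := by
      intro a b q
      induction q with
      | nil => exact id
      | cons hadj q ih =>
        intro ha
        apply ih
        obtain ⟨i, hi, hil⟩ := SimpleGraph.Walk.mem_support_iff_exists_getVert.1 ha
        apply (key i hil).2
        rw [hi]
        exact hadj
    exact this x v q p.start_mem_support
  obtain ⟨v, hv⟩ := hcyc
  obtain ⟨i, hi, hil⟩ := SimpleGraph.Walk.mem_support_iff_exists_getVert.1 (all v)
  apply (key i hil).1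
  rw [hi]
  exact hv

/-- parity labels -/
theorem exists_labels (hG : Cac G) (hcyc : ∃ v, onC G v) (r : V) :
    ∃ t : V → Bool, (∀ u v, (Bg G).Adj u v → t u ≠ t v) ∧
      (∀ v, ndeg G v = 1 → t v = true) ∧
      (∀ u v, (Bg G).Adj u v → onC G u → onC G v → G.dist r u < G.dist r v → t v = false) := by
  obtain ⟨t0, ht0, -⟩ := potential G (fun _ _ => true) (fun _ _ => rfl)
    (Finset.univ.filter fun e => e ∈ G.edgeSet ∧ G.IsBridge e) (by simp)
  have ht0' : ∀ u v, (Bg G).Adj u v → xor (t0 u) (t0 v) = true := by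
    intro u v h
    apply ht0
    simp only [Finset.mem_filter, Finset.mem_univ, true_and]
    exact ⟨h.1, h.2⟩
  let far : V → Prop := fun v => onC G v ∧ ∃ u, (Bg G).Adj u v ∧ onC G u ∧ G.dist r u < G.dist r v
  -- uniqueness of the special vertex
  have uniq : ∀ x y, (ndeg G x = 1 ∨ far x) → (ndeg G y = 1 ∨ far y) →
      (Bg G).Reachable x y → x = y := by
    have aux : ∀ x y, far x → (ndeg G y = 1 ∨ far y) → (Bg G).Reachable x y → x = y := by
      rintro x y ⟨hx, u, hu, huC, hd⟩ hy hr
      rcases Breach_leaf_of_onC hG hx huC hu.symm hr with rfl | rfl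
      · rfl
      · exfalso
        rcases hy with hy | ⟨_, u', hu', _, hd'⟩
        · have := two_le_ndeg_of_onC hG huC
          omega
        · have := B_unique hG huC hu hu'.symm
          subst this
          omega
    intro x y hx hy hr
    rcases hx with hx | hx
    · rcases hy with hy | hy
      · exact leaves_ne hG hcyc hx hy hr
      · exact (aux y x hy (Or.inl hx) hr.symm).symm
    · exact aux x y hx hy hr
  let des : V → Bool := fun v => decide (ndeg G v = 1)
  let flip : (Bg G).ConnectedComponent → Bool := fun K =>
    if h : ∃ x, (ndeg G x = 1 ∨ far x) ∧ (Bg G).connectedComponentMk x = K then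
      xor (t0 h.choose) (des h.choose) else false
  have hflip : ∀ x, (ndeg G x = 1 ∨ far x) →
      flip ((Bg G).connectedComponentMk x) = xor (t0 x) (des x) := by
    intro x hx
    have h : ∃ y, (ndeg G y = 1 ∨ far y) ∧
      (Bg G).connectedComponentMk y = (Bg G).connectedComponentMk x := ⟨x, hx, rfl⟩
    have h2 := h.choose_spec
    have h3 : h.choose = x := uniq _ _ h2.1 hx (SimpleGraph.ConnectedComponent.exact h2.2)
    simp only [flip, dif_pos h]
    rw [h3]
  refine ⟨fun v => xor (t0 v) (flip ((Bg G).connectedComponentMk v)), ?_, ?_, ?_⟩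
  · intro u v h
    have h1 := ht0' u v h
    have h2 : (Bg G).connectedComponentMk u = (Bg G).connectedComponentMk v :=
      SimpleGraph.ConnectedComponent.sound h.reachable
    simp only [h2]
    revert h1
    cases t0 u <;> cases t0 v <;> simp
  · intro v hv
    simp only [hflip v (Or.inl hv), des, hv]
    cases t0 v <;> rfl
  · intro u v h hu hv hd
    have hn := two_le_ndeg_of_onC hG hv
    have : ¬ ndeg G v = 1 := by omega
    simp only [hflip v (Or.inr ⟨hv, u, h, hu, hd⟩), des, this]
    cases t0 v <;> rfl

end DL

namespace DL

variable {V : Type*} [Fintype V] {G : SimpleGraph V}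

/-- The enumeration of a cycle component. -/
def Enum (G : SimpleGraph V) {N : ℕ} (f : ZMod (N + 3) → V) : Prop :=
  Function.Injective f ∧ ∀ i w, (Hg G).Adj (f i) w ↔ w = f (i - 1) ∨ w = f (i + 1)

theorem two_ne {N : ℕ} (i : ZMod (N + 3)) : i + 1 + 1 ≠ i := by
  intro h
  have h2 : ((2 : ℕ) : ZMod (N + 3)) = 0 := by
    push_cast
    linear_combination h
  rw [ZMod.natCast_eq_zero_iff] at h2
  have := Nat.le_of_dvd (by norm_num) h2
  omega

theorem one_ne {N : ℕ} (i : ZMod (N + 3)) : i + 1 ≠ i := by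
  intro h
  have := two_ne i
  rw [h, h] at this
  exact this rfl

theorem two_ne' {N : ℕ} (i : ZMod (N + 3)) : i + 1 ≠ i - 1 := by
  intro h
  apply two_ne (i - 1)
  rw [sub_add_cancel, h]

theorem cyc_h1 (hG : Cac G)
    (hnot : ∀ m : ℕ, 3 ≤ m → IsEmpty (G ≃g SimpleGraph.cycleGraph m))
    {N : ℕ} {f : ZMod (N + 3) → V} (hf : Enum G f) : ∃ i w, (Bg G).Adj (f i) w := by
  by_contra hno
  push Not at hno
  have hadj : ∀ i w, G.Adj (f i) w ↔ w = f (i - 1) ∨ w = f (i + 1) := by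
    intro i w
    rw [← hf.2]
    constructor
    · intro h
      rcases adj_cases h with h | h
      · exact absurd h (hno _ _)
      · exact h
    · exact fun h => h.1
  have surj : Function.Surjective f := by
    intro v
    obtain ⟨q⟩ := hG.conn.preconnected (f 0) v
    have : ∀ a b : V, G.Walk a b → (∃ i, f i = a) → (∃ i, f i = b) := by
      intro a b q
      induction q with
      | nil => exact id
      | cons h q ih =>
        rintro ⟨i, rfl⟩
        apply ih
        rcases (hadj _ _).1 h with h | h
        · exact ⟨_, h.symm⟩
        · exact ⟨_, h.symm⟩
    exact this _ _ q ⟨0, rfl⟩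
  have hcg : ∀ a b : ZMod (N + 3), (SimpleGraph.cycleGraph (N + 3)).Adj a b ↔
      (a - b = 1 ∨ b - a = 1) := fun a b => SimpleGraph.cycleGraph_adj (n := N + 1)
  have main : ∀ a b : ZMod (N + 3), G.Adj (f a) (f b) ↔ (a - b = 1 ∨ b - a = 1) := by
    intro a b
    rw [hadj, hf.1.eq_iff, hf.1.eq_iff]
    constructor
    · rintro (rfl | rfl)
      · left; ring
      · right; ring
    · rintro (h | h)
      · left; linear_combination -h
      · right; linear_combination h
  refine (hnot (N + 3) (by omega)).false (SimpleGraph.Iso.symm ?_)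
  refine ⟨@Equiv.ofBijective (Fin (N + 3)) V f ⟨hf.1, surj⟩, ?_⟩
  intro a b
  exact (main a b).trans (hcg a b).symm

theorem cyc_h2 (hG : Cac G) {r : V} (hr : onC G r → ∀ w, ¬ (Bg G).Adj r w) {t : V → Bool}
    (ht : ∀ u v, (Bg G).Adj u v → onC G u → onC G v → G.dist r u < G.dist r v → t v = false)
    {N : ℕ} {f : ZMod (N + 3) → V} (hf : Enum G f) :
    ∃ i, ¬ (t (f i) = true ∧ ∃ w, (Bg G).Adj (f i) w ∧ onC G w) := by
  by_contra hno
  push Not at hno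
  have hon : ∀ i, onC G (f i) := fun i => ⟨f (i + 1), (hf.2 _ _).2 (Or.inr rfl)⟩
  have hrf : ∀ i, f i ≠ r := by
    rintro i rfl
    obtain ⟨-, w, hw, -⟩ := hno i
    exact hr (hon i) w hw
  obtain ⟨i, hi⟩ := Finite.exists_min (fun i => G.dist r (f i))
  obtain ⟨p, hp⟩ := hG.conn.exists_walk_length_eq_dist (f i) r
  cases p with
  | nil => exact hrf i rfl
  | @cons _ u _ h q =>
    have h1 := SimpleGraph.dist_le q
    rw [SimpleGraph.Walk.length_cons] at hp
    have h2 : G.dist r u < G.dist r (f i) := by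
      rw [SimpleGraph.dist_comm (u := r), SimpleGraph.dist_comm (u := r)]
      omega
    rcases adj_cases h with h | h
    · obtain ⟨h3, w, hw, hwC⟩ := hno i
      have := B_unique hG (hon i) h hw
      subst this
      have := ht _ _ hw.symm hwC (hon i) h2
      rw [h3] at this
      exact absurd this (by simp)
    · rcases (hf.2 _ _).1 h with rfl | rfl
      · exact absurd (hi (i - 1)) (by simpa using h2)
      · exact absurd (hi (i + 1)) (by simpa using h2)

/-- weighted degree w.r.t. dart colouring -/
noncomputable def wd (G : SimpleGraph V) (D : Finset (Sym2 V)) (c : V → V → Bool) (v : V)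
    (b : Bool) : ℕ :=
  ∑ w ∈ Finset.univ.filter (fun w => G.Adj v w ∧ c v w = b), (if s(v, w) ∈ D then 2 else 1)

/-- allowed weights for bridges -/
def allowed (G : SimpleGraph V) (t : V → Bool) (v w : V) (x : ℕ) : Prop :=
  (t v = false → (x = 2 ∨ (x = 4 ∧ onC G v))) ∧
  (t v = true → (x = 1 ∨ x = 3 ∨ (x = 4 ∧ ¬ onC G w)))

/-- local solution on a component of the nonbridge graph -/
structure LocSol (G : SimpleGraph V) (t : V → Bool) (v0 : V) (D : Finset (Sym2 V))
    (c : V → V → Bool) : Prop where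
  inD : ∀ e ∈ D, ∃ a b, e = s(a, b) ∧ (Hg G).Adj a b ∧ (Hg G).Reachable v0 a
  oneD : ∀ e ∈ D, ∀ e' ∈ D, e = e'
  br : ∀ v w, (Hg G).Reachable v0 v → (Bg G).Adj v w → allowed G t v w (wd G D c v (c v w))
  cy : ∀ v w, (Hg G).Reachable v0 v → (Hg G).Adj v w →
    c v w = c w v ∧ wd G D c v (c v w) ≠ wd G D c w (c v w)

theorem loc_tree (hG : Cac G) {t : V → Bool} (hl : ∀ v, ndeg G v = 1 → t v = true)
    {v0 : V} (hv : ¬ onC G v0) : ∃ D c, LocSol G t v0 D c := by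
  have hre : ∀ v, (Hg G).Reachable v0 v → v = v0 := by
    rintro v ⟨p⟩
    cases p with
    | nil => rfl
    | cons h p => exact absurd ⟨_, h⟩ hv
  cases htv : t v0 with
  | false =>
    refine ⟨∅, fun _ _ => false, by simp, by simp, ?_, ?_⟩
    · intro v w h hb
      obtain rfl := hre v h
      refine ⟨fun _ => Or.inl ?_, fun h => by rw [htv] at h; cases h⟩
      have h2 := ndeg_le_two hG hv
      have h1 : ndeg G v ≠ 1 := fun h => by
        have := hl v h
        rw [htv] at this
        cases this
      have h3 : wd G ∅ (fun _ _ => false) v false = ndeg G v := by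
        simp [wd, ndeg, Set.ncard_eq_toFinset_card']
      have h0 : ndeg G v ≠ 0 := by
        exact ((Set.ncard_pos (Set.toFinite _)).2 ⟨w, hb.1⟩).ne'
      rw [h3]
      omega
    · intro v w h hb
      obtain rfl := hre v h
      exact absurd ⟨_, hb⟩ hv
  | true =>
    by_cases hn : ∃ w, (Bg G).Adj v0 w
    · obtain ⟨w0, hw0⟩ := hn
      refine ⟨∅, fun _ w => decide (w = w0), by simp, by simp, ?_, ?_⟩
      · intro v w h hb
        obtain rfl := hre v h
        refine ⟨fun h => (by rw [htv] at h; cases h), fun _ => Or.inl ?_⟩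
        have : (Finset.univ.filter fun z => G.Adj v z ∧ decide (z = w0) = decide (w = w0)) =
            {w} := by
          ext z
          simp only [Finset.mem_filter, Finset.mem_univ, true_and, Finset.mem_singleton,
            decide_eq_decide]
          constructor
          · rintro ⟨h1, h2⟩
            by_cases hw : w = w0
            · rw [hw]; exact h2.2 hw
            · rcases B_two hG hw0 hb (Ne.symm hw) h1 with h3 | h3
              · exact absurd (h2.1 h3) hw
              · exact h3
          · rintro rfl
            exact ⟨hb.1, Iff.rfl⟩
        unfold wd
        rw [this]
        simp
      · intro v w h hb
        obtain rfl := hre v h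
        exact absurd ⟨_, hb⟩ hv
    · refine ⟨∅, fun _ w => true, by simp, by simp, ?_, ?_⟩
      · intro v w h hb
        obtain rfl := hre v h
        exact absurd ⟨_, hb⟩ hn
      · intro v w h hb
        obtain rfl := hre v h
        exact absurd ⟨_, hb⟩ hv

theorem loc_cycle (hG : Cac G)
    (hnot : ∀ m : ℕ, 3 ≤ m → IsEmpty (G ≃g SimpleGraph.cycleGraph m))
    {r : V} (hr : onC G r → ∀ w, ¬ (Bg G).Adj r w) {t : V → Bool}
    (ht : ∀ u v, (Bg G).Adj u v → onC G u → onC G v → G.dist r u < G.dist r v → t v = false)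
    {v0 : V} (hv : onC G v0) : ∃ D c, LocSol G t v0 D c := by
  obtain ⟨N, f, hinj, ⟨i0, hi0⟩, hH⟩ := exists_enum hG hv
  have hf : Enum G f := ⟨hinj, hH⟩
  have hre : ∀ v, (Hg G).Reachable v0 v → ∃ i, f i = v := by
    rintro v ⟨q⟩
    have : ∀ a b : V, (Hg G).Walk a b → (∃ i, f i = a) → (∃ i, f i = b) := by
      intro a b q
      induction q with
      | nil => exact id
      | cons h q ih =>
        rintro ⟨i, rfl⟩
        apply ih
        rcases (hH _ _).1 h with h | h
        · exact ⟨_, h.symm⟩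
        · exact ⟨_, h.symm⟩
    exact this _ _ q ⟨i0, hi0⟩
  have hre2 : ∀ i, (Hg G).Reachable v0 (f i) := by
    have hs : ∀ j, (Hg G).Reachable (f j) (f (j + 1)) := fun j =>
      SimpleGraph.Adj.reachable ((hH _ _).2 (Or.inr rfl))
    have : ∀ n : ℕ, (Hg G).Reachable (f i0) (f (i0 + n)) := by
      intro n
      induction n with
      | zero => simp
      | succ n ih =>
        push_cast
        rw [← add_assoc]
        exact ih.trans (hs _)
    intro i
    have h := this (i - i0).val
    rw [ZMod.natCast_zmod_val, add_sub_cancel, hi0] at h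
    exact h
  have hon : ∀ i, onC G (f i) := fun i => ⟨f (i + 1), (hH _ _).2 (Or.inr rfl)⟩
  let τ : ZMod (N + 3) → VT := fun i =>
    if ¬ ∃ w, (Bg G).Adj (f i) w then VT.F else
    if t (f i) = false then VT.E else
    if ∃ w, (Bg G).Adj (f i) w ∧ onC G w then VT.O else VT.P
  have hτF : ∀ i, τ i ≠ VT.F ↔ ∃ w, (Bg G).Adj (f i) w := by
    intro i
    simp only [τ]
    split_ifs <;> simp_all
  obtain ⟨e, d, g, hd, hsol⟩ : Sol τ := by
    apply sol_cycle
    · obtain ⟨i, hi⟩ := cyc_h1 hG hnot hf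
      exact ⟨i, (hτF i).2 hi⟩
    · obtain ⟨i, hi⟩ := cyc_h2 hG hr ht hf
      refine ⟨i, ?_⟩
      simp only [τ]
      split_ifs <;> simp_all
  let idx : V → ZMod (N + 3) := Function.invFun f
  have hidx : ∀ i, idx (f i) = i := Function.leftInverse_invFun hinj
  let c : V → V → Bool := fun v w =>
    if w = f (idx v + 1) then e (idx v) else if w = f (idx v - 1) then e (idx v - 1)
    else g (idx v)
  let D : Finset (Sym2 V) :=
    (Finset.univ.filter fun i => d i = true).image fun i => s(f i, f (i + 1))
  have hD : ∀ i, s(f i, f (i + 1)) ∈ D ↔ d i = true := by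
    intro i
    simp only [D, Finset.mem_image, Finset.mem_filter, Finset.mem_univ, true_and]
    constructor
    · rintro ⟨j, hj, h⟩
      rw [Sym2.eq_iff] at h
      rcases h with ⟨h, -⟩ | ⟨h, h'⟩
      · rw [← hinj h]; exact hj
      · have h1 := hinj h
        have h2 := hinj h'
        subst h1
        exact absurd h2 (two_ne i)
    · intro h
      exact ⟨i, h, rfl⟩
  have hD' : ∀ i, s(f i, f (i - 1)) ∈ D ↔ d (i - 1) = true := by
    intro i
    have := hD (i - 1)
    rw [sub_add_cancel, Sym2.eq_swap] at this
    exact this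
  have hDH : ∀ e ∈ D, ∃ a b, e = s(a, b) ∧ (Hg G).Adj a b ∧ (Hg G).Reachable v0 a := by
    intro x hx
    simp only [D, Finset.mem_image, Finset.mem_filter, Finset.mem_univ, true_and] at hx
    obtain ⟨j, hj, rfl⟩ := hx
    exact ⟨_, _, rfl, (hH _ _).2 (Or.inr rfl), hre2 j⟩
  have hDB : ∀ u w, (Bg G).Adj u w → s(u, w) ∉ D := by
    intro u w hb hx
    obtain ⟨a, b, hab, hh, -⟩ := hDH _ hx
    have h2 := hh.2
    rw [← hab] at h2
    exact h2 hb.2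
  have hc1 : ∀ i, c (f i) (f (i + 1)) = e i := by
    intro i
    simp [c, hidx]
  have hc2 : ∀ i, c (f i) (f (i - 1)) = e (i - 1) := by
    intro i
    have : ¬ (f (i - 1) = f (i + 1)) := fun h => two_ne' i (hinj h).symm
    simp [c, hidx, this]
  have hc3 : ∀ i w, (Bg G).Adj (f i) w → c (f i) w = g i := by
    intro i w hb
    have h1 : w ≠ f (i + 1) := by
      rintro rfl
      exact not_B_H hb ((hH _ _).2 (Or.inr rfl))
    have h2 : w ≠ f (i - 1) := by
      rintro rfl
      exact not_B_H hb ((hH _ _).2 (Or.inl rfl))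
    simp [c, hidx, h1, h2]
  have hne : ∀ i, f (i - 1) ≠ f (i + 1) := fun i h => two_ne' i (hinj h).symm
  have hwd : ∀ i b, wd G D c (f i) b = W τ e d g i b := by
    intro i b
    have expand : wd G D c (f i) b = ∑ w ∈ Finset.univ.filter (fun w => G.Adj (f i) w),
        if c (f i) w = b then (if s(f i, w) ∈ D then 2 else 1) else 0 := by
      unfold wd
      rw [← Finset.filter_filter, Finset.sum_filter]
    have tm : ∀ x : Bool, (if x = true then 2 else 1) = 1 + x.toNat := by decide
    rw [expand]
    unfold W
    by_cases hF : ∃ w, (Bg G).Adj (f i) w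
    · obtain ⟨w, hw⟩ := hF
      have hF' : τ i ≠ VT.F := (hτF i).2 ⟨w, hw⟩
      have hn1 : f (i - 1) ≠ w := by
        rintro rfl
        exact not_B_H hw ((hH _ _).2 (Or.inl rfl))
      have hn2 : f (i + 1) ≠ w := by
        rintro rfl
        exact not_B_H hw ((hH _ _).2 (Or.inr rfl))
      have hset : Finset.univ.filter (fun w => G.Adj (f i) w) = {f (i - 1), f (i + 1), w} := by
        ext z
        simp only [Finset.mem_filter, Finset.mem_univ, true_and, Finset.mem_insert,
          Finset.mem_singleton]
        constructor
        · intro h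
          rcases adj_cases h with h | h
          · exact Or.inr (Or.inr (B_unique hG (hon i) h hw))
          · rcases (hH _ _).1 h with h | h
            · exact Or.inl h
            · exact Or.inr (Or.inl h)
        · rintro (rfl | rfl | rfl)
          · exact ((hH _ _).2 (Or.inl rfl)).1
          · exact ((hH _ _).2 (Or.inr rfl)).1
          · exact hw.1
      rw [hset, Finset.sum_insert (by simp [hne i, hn1]), Finset.sum_insert (by simp [hn2]),
        Finset.sum_singleton, hc1, hc2, hc3 i w hw, if_neg (hDB _ _ hw)]
      simp only [hD, hD', tm, hF', ne_eq, not_false_eq_true, true_and]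
      ring
    · have hF' : ¬ (τ i ≠ VT.F) := fun h => hF ((hτF i).1 h)
      have hset : Finset.univ.filter (fun w => G.Adj (f i) w) = {f (i - 1), f (i + 1)} := by
        ext z
        simp only [Finset.mem_filter, Finset.mem_univ, true_and, Finset.mem_insert,
          Finset.mem_singleton]
        constructor
        · intro h
          rcases adj_cases h with h | h
          · exact absurd ⟨_, h⟩ hF
          · exact (hH _ _).1 h
        · intro h
          exact ((hH _ _).2 h).1
      rw [hset, Finset.sum_pair (hne i), hc1, hc2, if_neg (fun h : τ i ≠ VT.F ∧ g i = b => hF' h.1)]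
      simp only [hD, hD', tm]
      ring
  refine ⟨D, c, hDH, ?_, ?_, ?_⟩
  · intro x hx y hy
    simp only [D, Finset.mem_image, Finset.mem_filter, Finset.mem_univ, true_and] at hx hy
    obtain ⟨j, hj, rfl⟩ := hx
    obtain ⟨k, hk, rfl⟩ := hy
    rw [hd j k hj hk]
  · intro v w hvr hb
    obtain ⟨i, rfl⟩ := hre v hvr
    rw [hc3 i w hb, hwd]
    have hok := (hsol i).1
    have hex : ∃ w, (Bg G).Adj (f i) w := ⟨w, hb⟩
    constructor
    · intro htf
      have : τ i = VT.E := by simp [τ, hex, htf]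
      rcases hok.2.2 this with h | h
      · exact Or.inl h
      · exact Or.inr ⟨h, hon i⟩
    · intro htf
      by_cases hw : onC G w
      · have h2 : ∃ w, (Bg G).Adj (f i) w ∧ onC G w := ⟨w, hb, hw⟩
        have : τ i = VT.O := by simp [τ, hex, htf, h2]
        rcases hok.1 this with h | h
        · exact Or.inl h
        · exact Or.inr (Or.inl h)
      · have h2 : ¬ ∃ w, (Bg G).Adj (f i) w ∧ onC G w := by
          rintro ⟨z, hz, hzC⟩
          rw [B_unique hG (hon i) hz hb] at hzC
          exact hw hzC
        have : τ i = VT.P := by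
          simp only [τ]
          rw [if_neg (not_not.2 hex), if_neg (by simp [htf]), if_neg h2]
        rcases hok.2.1 this with h | h | h
        · exact Or.inl h
        · exact Or.inr (Or.inl h)
        · exact Or.inr (Or.inr ⟨h, hw⟩)
  · intro v w hvr hh
    obtain ⟨i, rfl⟩ := hre v hvr
    have key : ∀ i, c (f i) (f (i + 1)) = c (f (i + 1)) (f i) ∧
        wd G D c (f i) (c (f i) (f (i + 1))) ≠ wd G D c (f (i + 1)) (c (f i) (f (i + 1))) := by
      intro i
      have h2 := hc2 (i + 1)
      rw [add_sub_cancel_right] at h2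
      rw [hc1, h2, hwd, hwd]
      exact ⟨rfl, (hsol i).2⟩
    rcases (hH _ _).1 hh with rfl | rfl
    · have := key (i - 1)
      rw [sub_add_cancel] at this
      refine ⟨this.1.symm, ?_⟩
      rw [← this.1]
      exact this.2.symm
    · exact key i

end DL

namespace DL

variable {V : Type*} [Fintype V] {G : SimpleGraph V}

/-- edges of a cycle: all vertices of the cycle lie in one component of the nonbridge graph -/
theorem cyc_reach {u x y : V} {p : G.Walk u u} (hp : p.IsCycle) (hx : x ∈ p.support)
    (hy : y ∈ p.support) : (Hg G).Reachable x y := by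
  have : ∀ z ∈ p.support, (Hg G).Reachable u z := by
    have hsub : ∀ e ∈ p.edges, e ∈ (Hg G).edgeSet := by
      intro e
      induction e with
      | _ a b => exact fun he => H_of_cyc hp he
    intro z hz
    have hz' : z ∈ (p.transfer (Hg G) hsub).support := by
      rw [SimpleGraph.Walk.support_transfer]
      exact hz
    exact ⟨(p.transfer (Hg G) hsub).takeUntil z hz'⟩
  exact (this x hx).symm.trans (this y hy)

theorem count_le (hG : Cac G) (D : Finset (Sym2 V))
    (h1 : ∀ e ∈ D, ∃ a b, e = s(a, b) ∧ (Hg G).Adj a b)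
    (h2 : ∀ e ∈ D, ∀ f ∈ D, ∀ x y : V, x ∈ e → y ∈ f → (Hg G).Reachable x y → e = f) :
    D.card ≤ G.edgeSet.ncard + 1 - Fintype.card V := by
  have hsub : (D : Set (Sym2 V)) ⊆ G.edgeSet := by
    intro e he
    obtain ⟨a, b, rfl, h⟩ := h1 e he
    exact h.1
  have hadj : ∀ a b, G.Adj a b → (G.deleteEdges (D : Set (Sym2 V))).Reachable a b := by
    intro a b hab
    by_cases hD : s(a, b) ∈ D
    · obtain ⟨a', b', he, hH⟩ := h1 _ hD
      have hH' : (Hg G).Adj a b := by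
        rw [← SimpleGraph.mem_edgeSet, he, SimpleGraph.mem_edgeSet]
        exact hH
      obtain ⟨u, p, hp, hpe⟩ := cyc_of_H hH'
      let G' := G.deleteEdges ((D : Set (Sym2 V)) \ {s(a, b)})
      have hp' : ∀ e ∈ p.edges, e ∈ G'.edgeSet := by
        intro e he
        rw [SimpleGraph.edgeSet_deleteEdges]
        refine ⟨p.edges_subset_edgeSet he, ?_⟩
        rintro ⟨heD, hne⟩
        apply hne
        revert he heD
        induction e with
        | _ x y =>
          intro he heD
          refine h2 _ heD _ hD x a (Sym2.mem_mk_left _ _) (Sym2.mem_mk_left _ _) ?_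
          exact cyc_reach hp (p.fst_mem_support_of_mem_edges he)
            (p.fst_mem_support_of_mem_edges hpe)
      have := (SimpleGraph.adj_and_reachable_delete_edges_iff_exists_cycle (G := G')
        (v := a) (w := b)).2 ⟨u, p.transfer G' hp', hp.transfer hp', by
          rw [SimpleGraph.Walk.edges_transfer]; exact hpe⟩
      refine this.2.mono ?_
      intro x y hxy
      simp only [G', SimpleGraph.deleteEdges_adj, SimpleGraph.sdiff_adj,
        SimpleGraph.fromEdgeSet_adj] at hxy ⊢
      simp only [Set.mem_diff, Set.mem_singleton_iff] at hxy
      have := hxy.1.1.ne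
      tauto
    · apply SimpleGraph.Adj.reachable
      rw [SimpleGraph.deleteEdges_adj]
      exact ⟨hab, hD⟩
  have hconn : (G.deleteEdges (D : Set (Sym2 V))).Connected := by
    haveI := hG.conn.nonempty
    refine ⟨?_⟩
    intro a b
    obtain ⟨q⟩ := hG.conn.preconnected a b
    induction q with
    | nil => rfl
    | cons h q ih => exact (hadj _ _ h).trans ih
  have hc := hconn.card_vert_le_card_edgeSet_add_one
  rw [SimpleGraph.edgeSet_deleteEdges, Nat.card_coe_set_eq, Nat.card_eq_fintype_card,
    Set.ncard_diff hsub, Set.ncard_coe_finset] at hc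
  have hle := Set.ncard_le_ncard hsub (Set.toFinite _)
  rw [Set.ncard_coe_finset] at hle
  omega

theorem main (hG : Cac G) (hcyc : ∃ v, onC G v)
    (hnot : ∀ m : ℕ, 3 ≤ m → IsEmpty (G ≃g SimpleGraph.cycleGraph m)) :
    ∃ (E_d : Finset (Sym2 V)) (c : Sym2 V → Fin 2),
      ValidDC G E_d c ∧
      E_d.card ≤ G.edgeSet.ncard + 1 - Fintype.card V ∧
      (∀ e ∈ E_d, ∀ f ∈ E_d, e ≠ f → ∀ x : V, x ∈ e → x ∉ f) ∧
      (∀ e ∈ E_d, ∀ x : V, x ∈ e → 2 ≤ ndeg G x) := by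
  obtain ⟨r, hr⟩ := exists_root hG
  obtain ⟨t, ht1, ht2, ht3⟩ := exists_labels hG hcyc r
  have hloc : ∀ v0, ∃ D c, LocSol G t v0 D c := by
    intro v0
    by_cases hv : onC G v0
    · exact loc_cycle hG hnot hr ht3 hv
    · exact loc_tree hG ht2 hv
  choose DD cc hs using fun K : (Hg G).ConnectedComponent => hloc K.out
  let mk : V → (Hg G).ConnectedComponent := (Hg G).connectedComponentMk
  have hmk : ∀ K v, (Hg G).Reachable K.out v → mk v = K := by
    intro K v h
    have : mk v = mk K.out := SimpleGraph.ConnectedComponent.sound h.symm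
    rw [this]
    exact Quot.out_eq K
  have hrk : ∀ v, (Hg G).Reachable (mk v).out v := fun v =>
    SimpleGraph.ConnectedComponent.exact (Quot.out_eq (mk v))
  have hmH : ∀ v w, (Hg G).Reachable v w → mk v = mk w := fun v w h =>
    SimpleGraph.ConnectedComponent.sound h
  let D : Finset (Sym2 V) := Finset.univ.filter fun e => ∃ K, e ∈ DD K
  have hmem : ∀ e K x, e ∈ DD K → x ∈ e → mk x = K ∧ onC G x := by
    intro e K x he hx
    obtain ⟨a, b, rfl, hab, hra⟩ := (hs K).inD e he
    rcases Sym2.mem_iff.1 hx with rfl | rfl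
    · exact ⟨hmk _ _ hra, ⟨_, hab⟩⟩
    · exact ⟨hmk _ _ (hra.trans hab.reachable), ⟨_, hab.symm⟩⟩
  have hDK : ∀ v w, s(v, w) ∈ D ↔ s(v, w) ∈ DD (mk v) := by
    intro v w
    simp only [D, Finset.mem_filter, Finset.mem_univ, true_and]
    constructor
    · rintro ⟨K, hK⟩
      rw [(hmem _ K v hK (Sym2.mem_mk_left _ _)).1]
      exact hK
    · exact fun h => ⟨_, h⟩
  let c : V → V → Bool := fun v w => cc (mk v) v w
  have hwd : ∀ v b, wd G D c v b = wd G (DD (mk v)) (cc (mk v)) v b := by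
    intro v b
    unfold wd
    simp only [hDK, c]
  have hbr : ∀ v w, (Bg G).Adj v w → wd G D c v (c v w) ≠ wd G D c w (c w v) := by
    intro v w h heq
    have h1 := (hs (mk v)).br v w (hrk v) h
    have h2 := (hs (mk w)).br w v (hrk w) h.symm
    rw [← hwd] at h1 h2
    change allowed G t v w (wd G D c v (c v w)) at h1
    change allowed G t w v (wd G D c w (c w v)) at h2
    rw [heq] at h1
    have h3 := ht1 v w h
    unfold allowed at h1 h2
    generalize wd G D c w (c w v) = x at *
    cases hv : t v <;> cases hw : t w <;> simp only [hv, hw] at h1 h2 h3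
    · exact h3 rfl
    · have h1' := h1.1 trivial
      have h2' := h2.2 trivial
      rcases h1' with h1' | h1' <;> rcases h2' with h2' | h2' | h2' <;> first | omega | tauto
    · have h1' := h1.2 trivial
      have h2' := h2.1 trivial
      rcases h2' with h2' | h2' <;> rcases h1' with h1' | h1' | h1' <;> first | omega | tauto
    · exact h3 rfl
  have hcy : ∀ v w, (Hg G).Adj v w →
      c v w = c w v ∧ wd G D c v (c v w) ≠ wd G D c w (c v w) := by
    intro v w h
    have h1 := (hs (mk v)).cy v w (hrk v) h
    have h2 : mk v = mk w := hmH v w h.reachable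
    rw [hwd, hwd]
    simp only [c]
    rw [← h2]
    exact h1
  obtain ⟨h, hh1, hh2⟩ := potential G (fun u v => xor (c u v) (c v u))
    (fun u v => Bool.xor_comm _ _)
    (Finset.univ.filter fun e => e ∈ G.edgeSet ∧ G.IsBridge e) (by simp)
  let c' : V → V → Bool := fun v w => xor (c v w) (h v)
  have hsym : ∀ u v, G.Adj u v → c' u v = c' v u := by
    intro u v huv
    simp only [c']
    rcases adj_cases huv with hb | hb
    · have := hh1 u v (by
        simp only [Finset.mem_filter, Finset.mem_univ, true_and]
        exact ⟨hb.1, hb.2⟩)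
      revert this
      cases c u v <;> cases c v u <;> cases h u <;> cases h v <;> simp
    · have := hh2 u v huv (by
        simp only [Finset.mem_filter, Finset.mem_univ, true_and]
        exact fun hx => hb.2 hx.2)
      rw [this, (hcy u v hb).1]
  have hwd' : ∀ u v, wd G D c' u (c' u v) = wd G D c u (c u v) := by
    intro u v
    unfold wd
    congr 1
    ext z
    simp only [Finset.mem_filter, Finset.mem_univ, true_and, c']
    cases c u z <;> cases c u v <;> cases h u <;> simp
  let cE : Sym2 V → Fin 2 := fun e =>
    if ∃ v w, e = s(v, w) ∧ G.Adj v w ∧ c' v w = true then 1 else 0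
  have hcE : ∀ u v, G.Adj u v → cE s(u, v) = if c' u v = true then 1 else 0 := by
    intro u v huv
    simp only [cE]
    congr 1
    apply propext
    constructor
    · rintro ⟨a, b, he, hab, hc⟩
      rw [Sym2.eq_iff] at he
      rcases he with ⟨rfl, rfl⟩ | ⟨rfl, rfl⟩
      · exact hc
      · rw [hsym _ _ huv]; exact hc
    · intro hc
      exact ⟨u, v, rfl, huv, hc⟩
  have hwdeg : ∀ u v, G.Adj u v → wdeg G D cE (cE s(u, v)) u = wd G D c u (c u v) := by
    intro u v huv
    rw [← hwd']
    unfold wdeg wd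
    congr 1
    ext z
    simp only [Finset.mem_filter, Finset.mem_univ, true_and]
    refine and_congr_right fun hz => ?_
    rw [hcE u z hz, hcE u v huv]
    cases c' u z <;> cases c' u v <;> simp
  have hDH : ∀ e ∈ D, ∃ a b, e = s(a, b) ∧ (Hg G).Adj a b := by
    intro e he
    simp only [D, Finset.mem_filter, Finset.mem_univ, true_and] at he
    obtain ⟨K, hK⟩ := he
    obtain ⟨a, b, rfl, hab, -⟩ := (hs K).inD e hK
    exact ⟨a, b, rfl, hab⟩
  have hDu : ∀ e ∈ D, ∀ f ∈ D, ∀ x y : V, x ∈ e → y ∈ f → (Hg G).Reachable x y → e = f := by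
    intro e he f hf x y hx hy hxy
    simp only [D, Finset.mem_filter, Finset.mem_univ, true_and] at he hf
    obtain ⟨K, hK⟩ := he
    obtain ⟨K', hK'⟩ := hf
    have h1 := (hmem e K x hK hx).1
    have h2 := (hmem f K' y hK' hy).1
    have h3 := hmH x y hxy
    have h4 : K = K' := by rw [← h1, ← h2, h3]
    subst h4
    exact (hs K).oneD e hK f hK'
  refine ⟨D, cE, ⟨?_, ?_⟩, count_le hG D hDH hDu, ?_, ?_⟩
  · intro e he
    obtain ⟨a, b, rfl, hab⟩ := hDH e he
    exact hab.1
  · intro u v huv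
    rw [hwdeg u v huv, Sym2.eq_swap, hwdeg v u huv.symm]
    rcases adj_cases huv with hb | hb
    · exact hbr u v hb
    · have := hcy u v hb
      rw [← this.1]
      exact this.2
  · intro e he f hf hne x hx hx'
    exact hne (hDu e he f hf x x hx hx' (SimpleGraph.Reachable.refl x))
  · intro e he x hx
    simp only [D, Finset.mem_filter, Finset.mem_univ, true_and] at he
    obtain ⟨K, hK⟩ := he
    exact two_le_ndeg_of_onC hG (hmem e K x hK hx).2

end DL

/-- A non-cycle member of the family `𝔗*`: a connected graph that contains a cycle,
is not itself a cycle, every edge lies on at most one cycle, the maximum degree is at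
most `3`, and every vertex of degree `3` lies on a cycle.  If `k = |E| - |V| + 1` is the
number of cycles of `G`, then there is a matching `E_d` of at most `k` non-pendant edges
and a coloring `c` such that `(E_d, c)` is a valid doubling-coloring of `G`. -/
theorem Dlir_special_cacti {V : Type*} [Fintype V] (G : SimpleGraph V)
    (hconn : G.Connected)
    (hcyc : ∃ (u : V) (p : G.Walk u u), p.IsCycle)
    (hnotcycle : ∀ m : ℕ, 3 ≤ m → IsEmpty (G ≃g SimpleGraph.cycleGraph m))
    (hcactus : ∀ (e : Sym2 V) (u v : V) (p : G.Walk u u) (q : G.Walk v v),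
      p.IsCycle → q.IsCycle → e ∈ p.edges → e ∈ q.edges →
      ∀ f : Sym2 V, f ∈ p.edges ↔ f ∈ q.edges)
    (hdeg3 : ∀ v, ndeg G v ≤ 3)
    (hdeg3cyc : ∀ v, ndeg G v = 3 →
      ∃ (u : V) (p : G.Walk u u), p.IsCycle ∧ v ∈ p.support)
    (k : ℕ) (hk : k = G.edgeSet.ncard + 1 - Fintype.card V) :
    ∃ (E_d : Finset (Sym2 V)) (c : Sym2 V → Fin 2),
      ValidDC G E_d c ∧
      E_d.card ≤ k ∧
      (∀ e ∈ E_d, ∀ f ∈ E_d, e ≠ f → ∀ x : V, x ∈ e → x ∉ f) ∧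
      (∀ e ∈ E_d, ∀ x : V, x ∈ e → 2 ≤ ndeg G x) := by
  obtain ⟨u, p, hp⟩ := hcyc
  subst hk
  exact DL.main ⟨hconn, hcactus, hdeg3, hdeg3cyc⟩
    ⟨u, DL.onC_of_support hp p.start_mem_support⟩ hnotcycle
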